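/- Let p : SO(n+1) → Sⁿ be the canonical fiber bundle (quotient by SO(n)). Then the composite π_{n+1}(S^{n+1}) → π_n(SO(n+1)) → π_n(Sⁿ) obtained from the boundary map of the fibration SO(n+1) → SO(n+2) → S^{n+1} followed by p_* is, for n odd, multiplication by 2 under the identifications π_{n+1}(S^{n+1}) ≅ ℤ ≅ π_n(Sⁿ). -/

import Mathlib

/-!
By exactness, the image of a generator under the connecting homomorphism generates the kernel of
`π_n(SO(n + 1)) → π_n(SO(n + 2))`. Composites of two reflections give an explicit loop in
`SO(n + 1)` whose inclusion into `SO(n + 2)` extends over the `(n + 1)`-cube, and the orbit map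
sends this filling to a map of `Sⁿ⁺¹` that has exactly one nondegenerate point over the south pole,
hence represents a generator. By homotopy lifting, the class of the loop generates the kernel. The
orbit map sends the loop itself to a map of `Sⁿ` that has two points over the south pole, whose
local signs agree for odd `n`, hence to twice a generator up to sign.

The degree formula converts these counts into homotopy classes: cutting the cube between two
preimages expresses a class as a product, by induction over the preimages, and near a single
nondegenerate preimage the map is homotopic to its linearization, which transvections deform to a
reflection or the identity. Smooth approximation and Sard's theorem put every class into this form,
so the class of degree one is a generator.
-/

open Matrix

set_option synthInstance.maxHeartbeats 1000000
set_option maxHeartbeats 1000000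

/-- The map induced by a continuous map `f : X → Y` on homotopy groups,
`f_* : π_N(X, x) → π_N(Y, f x)`, given by postcomposition. -/
def piMap {N X Y : Type*} [TopologicalSpace X] [TopologicalSpace Y] {x : X}
    (f : C(X, Y)) : HomotopyGroup N X x → HomotopyGroup N Y (f x) :=
  Quotient.map
    (fun p => ⟨f.comp p.1, fun y hy => by
      simp only [ContinuousMap.comp_apply, p.2 y hy]⟩)
    (fun p q h => Nonempty.map (fun H => H.compContinuousMap f) h)

namespace Steenrod

open scoped unitInterval Topology Topology.Homotopy
open GenLoop Filter

theorem exists_isCoprime_two_mul (a k : ℤ) :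
    ∃ b, IsCoprime b (2 * (a * k - 1)) ∧ (b = a ∨ b = a + (a * k - 1)) := by
  have hcop : IsCoprime a (a * k - 1) := ⟨k, -1, by ring⟩
  have two_of_odd {b : ℤ} (hb : Odd b) : IsCoprime b 2 := by
    obtain ⟨r, rfl⟩ := hb
    exact ⟨1, -r, by ring⟩
  rcases Int.even_or_odd a with ha | ha
  · have hodd : Odd (a + (a * k - 1)) := ha.add_odd ((ha.mul_right k).sub_odd odd_one)
    exact ⟨_, (two_of_odd hodd).mul_right (by simpa using hcop.add_mul_left_left 1), Or.inr rfl⟩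
  · exact ⟨a, (two_of_odd ha).mul_right hcop, Or.inl rfl⟩

theorem exists_zpowers_eq_top_of_zpowers_eq_zpowers_mul_self {G : Type*} [Group G] {g c : G}
    (hg : Subgroup.zpowers g = ⊤) (hc : Subgroup.zpowers c = Subgroup.zpowers (g * g)) :
    ∃ b, Subgroup.zpowers b = ⊤ ∧ c = b * b := by
  obtain ⟨a, rfl⟩ := Subgroup.mem_zpowers_iff.mp (hc ▸ Subgroup.mem_zpowers c)
  obtain ⟨k, hk⟩ := Subgroup.mem_zpowers_iff.mp (hc ▸ Subgroup.mem_zpowers (g * g))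
  have hmul (r : ℤ) : (g * g) ^ r = g ^ (2 * r) := by
    rw [← _root_.zpow_two, _root_.zpow_mul]
  have hone : g ^ (2 * (a * k - 1)) = 1 := by
    rw [← hmul, _root_.zpow_sub, _root_.zpow_mul, hk, zpow_one, mul_inv_cancel]
  obtain ⟨b, ⟨u, v, huv⟩, hb⟩ := exists_isCoprime_two_mul a k
  refine ⟨g ^ b, ?_, ?_⟩
  · rw [eq_top_iff, ← hg, Subgroup.zpowers_le]
    refine Subgroup.mem_zpowers_iff.mpr ⟨u, ?_⟩
    calc (g ^ b) ^ u = g ^ (u * b + v * (2 * (a * k - 1))) := by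
          rw [_root_.zpow_add, mul_comm v, _root_.zpow_mul g (2 * _), hone, _root_.one_zpow,
            mul_one, mul_comm u, _root_.zpow_mul]
      _ = g := by rw [huv, zpow_one]
  · rw [hmul, ← _root_.zpow_add, ← two_mul]
    rcases hb with rfl | rfl
    · rfl
    · rw [mul_add, _root_.zpow_add, hone, mul_one]

section HomotopyGroup

variable {N X Y : Type*} [TopologicalSpace X] [TopologicalSpace Y] {x : X}

/-- The element of the homotopy group represented by a generalized loop. -/
def loopClass (f : Ω^ N X x) : HomotopyGroup N X x := ⟦f⟧

theorem loopClass_surjective : Function.Surjective (loopClass (N := N) (x := x)) :=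
  Quotient.exists_rep

theorem loopClass_eq_iff {f g : Ω^ N X x} : loopClass f = loopClass g ↔
    ∃ H : I × (I^N) → X, Continuous H ∧ (∀ y, H (0, y) = f y) ∧ (∀ y, H (1, y) = g y) ∧
      ∀ t, ∀ y ∈ Cube.boundary N, H (t, y) = x := by
  constructor
  · intro h
    obtain ⟨H⟩ := Quotient.exact h
    exact ⟨H, H.continuous, H.apply_zero, H.apply_one,
      fun t y hy ↦ (H.eq_fst t hy).trans (f.2 y hy)⟩
  · rintro ⟨H, hH, h0, h1, hb⟩
    exact Quotient.sound
      ⟨⟨⟨⟨H, hH⟩, h0, h1⟩, fun t y hy ↦ (hb t y hy).trans (f.2 y hy).symm⟩⟩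

theorem piMap_loopClass (f : C(X, Y)) (p : Ω^ N X x) (g : Ω^ N Y (f x)) (h : ∀ y, g y = f (p y)) :
    piMap f (loopClass p) = loopClass g :=
  congrArg loopClass (GenLoop.ext _ _ fun y ↦ (h y).symm)

variable [DecidableEq N]

theorem transAt_apply (i : N) (f g : Ω^ N X x) (t : I^N) :
    transAt i f g t = if (t i : ℝ) ≤ 1 / 2
      then f (Function.update t i <| Set.projIcc 0 1 zero_le_one (2 * t i))
      else g (Function.update t i <| Set.projIcc 0 1 zero_le_one (2 * t i - 1)) := rfl

theorem symmAt_apply (i : N) (f : Ω^ N X x) (t : I^N) :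
    symmAt i f t = f (Function.update t i (σ (t i))) := by
  refine congrArg f (funext fun k ↦ ?_)
  rcases eq_or_ne k i with rfl | hk <;> simp [*]

theorem update_mem_boundary {ρ : I → I} (h0 : ρ 0 = 0 ∨ ρ 0 = 1) (h1 : ρ 1 = 0 ∨ ρ 1 = 1) (i : N)
    {y : I^N} (hy : y ∈ Cube.boundary N) : Function.update y i (ρ (y i)) ∈ Cube.boundary N := by
  obtain ⟨k, hk⟩ := hy
  refine ⟨k, ?_⟩
  rcases eq_or_ne k i with rfl | hki
  · rcases hk with hk | hk <;> simp [hk, h0, h1]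
  · simpa [Function.update_of_ne hki] using hk

theorem loopClass_eq_of_reparam (i : N) {ρ : I → I} (hρ : Continuous ρ) (h0 : ρ 0 = 0)
    (h1 : ρ 1 = 1) {f g : Ω^ N X x} (hg : ∀ y, g y = f (Function.update y i (ρ (y i)))) :
    loopClass f = loopClass g := by
  let r : I × I → I := fun z ↦
    ⟨(1 - (z.1 : ℝ)) * z.2 + z.1 * ρ z.2,
      (convex_Icc (0 : ℝ) 1) z.2.2 (ρ z.2).2 (sub_nonneg.mpr z.1.2.2) z.1.2.1 (by ring)⟩
  have hr : Continuous r := by fun_prop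
  refine loopClass_eq_iff.mpr ⟨fun z ↦ f (Function.update z.2 i (r (z.1, z.2 i))), ?_, ?_, ?_, ?_⟩
  · exact (map_continuous f).comp
      (continuous_snd.update i (hr.comp (by fun_prop)))
  · intro y
    simp [r]
  · intro y
    simp [r, hg]
  · intro s y hy
    exact f.2 _
      (update_mem_boundary (ρ := fun u ↦ r (s, u)) (by simp [r, h0]) (by simp [r, h1]) i hy)

/-- The piecewise linear self-map of the unit interval that takes `[0, 1/2]` onto `[0, t]` and
`[1/2, 1]` onto `[t, 1]`. -/
noncomputable def breakAt (t s : I) : I :=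
  Set.projIcc 0 1 zero_le_one (t * min (2 * (s : ℝ)) 1 + (1 - t) * max (2 * (s : ℝ) - 1) 0)

theorem continuous_breakAt (t : I) : Continuous (breakAt t) := by
  unfold breakAt
  fun_prop

theorem breakAt_zero (t : I) : breakAt t 0 = 0 := by simp [breakAt]

theorem breakAt_one (t : I) : breakAt t 1 = 1 := by
  norm_num [breakAt]

theorem breakAt_of_le_half {t s : I} (hs : (s : ℝ) ≤ 1 / 2) :
    breakAt t s = t * Set.projIcc 0 1 zero_le_one (2 * (s : ℝ)) := by
  have hmem : 2 * (s : ℝ) ∈ Set.Icc (0 : ℝ) 1 := ⟨by linarith [s.2.1], by linarith⟩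
  have hval : t * min (2 * (s : ℝ)) 1 + (1 - t) * max (2 * (s : ℝ) - 1) 0 = t * (2 * s) := by
    rw [min_eq_left hmem.2, max_eq_right (by linarith), mul_zero, add_zero]
  rw [breakAt, hval, Set.projIcc_of_mem _ (unitInterval.mul_mem t.2 hmem),
    Set.projIcc_of_mem _ hmem]
  rfl

theorem breakAt_of_half_le {t s : I} (hs : 1 / 2 ≤ (s : ℝ)) :
    breakAt t s = σ (σ t * σ (Set.projIcc 0 1 zero_le_one (2 * (s : ℝ) - 1))) := by
  have hmem : 2 * (s : ℝ) - 1 ∈ Set.Icc (0 : ℝ) 1 := ⟨by linarith, by linarith [s.2.2]⟩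
  have hval : t * min (2 * (s : ℝ)) 1 + (1 - t) * max (2 * (s : ℝ) - 1) 0 =
      (σ (σ t * σ ⟨2 * (s : ℝ) - 1, hmem⟩) : I) := by
    rw [min_eq_right (by linarith), max_eq_left hmem.1]
    simp only [unitInterval.coe_symm_eq, Set.Icc.coe_mul]
    ring
  rw [breakAt, hval, Set.projIcc_val, Set.projIcc_of_mem _ hmem]

variable [Nonempty N]

theorem loopClass_mul (i : N) (p q : Ω^ N X x) :
    loopClass p * loopClass q = loopClass (transAt i q p) :=
  HomotopyGroup.mul_spec

theorem loopClass_inv (i : N) (p : Ω^ N X x) : (loopClass p)⁻¹ = loopClass (symmAt i p) :=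
  HomotopyGroup.inv_spec

theorem loopClass_const : loopClass (const : Ω^ N X x) = 1 := rfl

theorem piMap_loopClass_eq_one_iff {f : C(X, Y)} {p : Ω^ N X x} : piMap f (loopClass p) = 1 ↔
    ∃ H : I × (I^N) → Y, Continuous H ∧ (∀ y, H (0, y) = f (p y)) ∧ (∀ y, H (1, y) = f x) ∧
      ∀ t, ∀ y ∈ Cube.boundary N, H (t, y) = f x := by
  let post : Ω^ N Y (f x) := ⟨f.comp p.1, fun y hy ↦ congrArg f (p.2 y hy)⟩
  exact loopClass_eq_iff (f := post) (g := const)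

theorem loopClass_eq_mul_of_restrict (i : N) (t : I) {f fl fr : Ω^ N X x}
    (hl : ∀ y, fl y = f (Function.update y i (t * y i)))
    (hr : ∀ y, fr y = f (Function.update y i (σ (σ t * σ (y i))))) :
    loopClass f = loopClass fr * loopClass fl := by
  rw [loopClass_mul i]
  refine loopClass_eq_of_reparam i (continuous_breakAt t) (breakAt_zero t) (breakAt_one t)
    fun y ↦ ?_
  rw [transAt_apply]
  split_ifs with h
  · simp only [hl, Function.update_idem, Function.update_self, breakAt_of_le_half h]
  · simp only [hr, Function.update_idem, Function.update_self, breakAt_of_half_le (not_le.mp h).le]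

theorem piMap_mul (f : C(X, Y)) (a b : HomotopyGroup N X x) :
    piMap f (a * b) = piMap f a * piMap f b := by
  obtain ⟨a, rfl⟩ := loopClass_surjective a
  obtain ⟨b, rfl⟩ := loopClass_surjective b
  let i : N := Classical.arbitrary N
  let post (p : Ω^ N X x) : Ω^ N Y (f x) :=
    ⟨f.comp p.1, fun y hy ↦ congrArg f (p.2 y hy)⟩
  have hpost (p : Ω^ N X x) : piMap f (loopClass p) = loopClass (post p) := rfl
  rw [loopClass_mul i, hpost a, hpost b, loopClass_mul i]
  refine piMap_loopClass f _ _ fun y ↦ ?_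
  rw [transAt_apply, transAt_apply]
  split_ifs <;> rfl

/-- The map `piMap f` on homotopy groups as a group homomorphism. -/
noncomputable def piHom (f : C(X, Y)) : HomotopyGroup N X x →* HomotopyGroup N Y (f x) :=
  MonoidHom.mk' (piMap f) (piMap_mul f)

end HomotopyGroup

/-- The unit sphere `Sⁿ` in `ℝⁿ⁺¹`. -/
abbrev UnitSphere (n : ℕ) := Metric.sphere (0 : EuclideanSpace ℝ (Fin (n + 1))) 1

/-- The base point `(1, 0, …, 0)` of the unit sphere. -/
noncomputable def spherePole (n : ℕ) : UnitSphere n := ⟨EuclideanSpace.single 0 1, by simp⟩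

section Pinch

variable {n : ℕ} {T : Type*} [TopologicalSpace T] {G : T → ℝ × (Fin n → ℝ)}

/-- The identification of `ℝ × ℝⁿ` with `ℝⁿ⁺¹`, the axis of the base point being the first
factor. -/
noncomputable def euclideanCons (n : ℕ) :
    (ℝ × (Fin n → ℝ)) ≃L[ℝ] EuclideanSpace ℝ (Fin (n + 1)) :=
  (Fin.consEquivL ℝ fun _ : Fin (n + 1) ↦ ℝ).trans
    (PiLp.continuousLinearEquiv 2 ℝ fun _ : Fin (n + 1) ↦ ℝ).symm

theorem euclideanCons_apply_zero (y : ℝ × (Fin n → ℝ)) : euclideanCons n y 0 = y.1 := rfl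

theorem euclideanCons_apply_succ (y : ℝ × (Fin n → ℝ)) (i : Fin n) :
    euclideanCons n y i.succ = y.2 i := rfl

theorem euclideanCons_one_zero : euclideanCons n (1, 0) = (spherePole n).1 := by
  ext i
  induction i using Fin.cases with
  | zero => simp [euclideanCons_apply_zero, spherePole]
  | succ j => simp [euclideanCons_apply_succ, spherePole]

open Classical in
/-- The radial projection of `ℝ × ℝⁿ` to the sphere. The origin goes to the base point. -/
noncomputable def toSphere (y : ℝ × (Fin n → ℝ)) : UnitSphere n :=
  if h : y = 0 then spherePole n else ⟨‖euclideanCons n y‖⁻¹ • euclideanCons n y, by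
    have : ‖euclideanCons n y‖ ≠ 0 := by simpa using h
    simp [norm_smul, this]⟩

theorem coe_toSphere {y : ℝ × (Fin n → ℝ)} (h : y ≠ 0) :
    (toSphere y : EuclideanSpace ℝ (Fin (n + 1))) =
      ‖euclideanCons n y‖⁻¹ • euclideanCons n y := by
  rw [toSphere, dif_neg h]

theorem continuous_toSphere_comp (hG : Continuous G) (h : ∀ t, G t ≠ 0) :
    Continuous fun t ↦ toSphere (G t) := by
  rw [Topology.IsInducing.subtypeVal.continuous_iff]
  have hcoe : (Subtype.val ∘ fun t ↦ toSphere (G t)) =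
      fun t ↦ ‖euclideanCons n (G t)‖⁻¹ • euclideanCons n (G t) :=
    funext fun t ↦ coe_toSphere (h t)
  rw [hcoe]
  have hcons : Continuous fun t ↦ euclideanCons n (G t) := (euclideanCons n).continuous.comp hG
  exact (hcons.norm.inv₀ fun t ↦ by simpa using h t).smul hcons

theorem toSphere_smul {c : ℝ} (hc : 0 < c) {y : ℝ × (Fin n → ℝ)} (hy : y ≠ 0) :
    toSphere (c • y) = toSphere y := by
  have hn : ‖euclideanCons n y‖ ≠ 0 := by simpa using hy
  refine Subtype.ext ?_
  rw [coe_toSphere hy, coe_toSphere (smul_ne_zero hc.ne' hy), map_smul, norm_smul,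
    Real.norm_of_nonneg hc.le, smul_smul]
  congr 1
  field_simp

/-- The coordinates in `ℝ × ℝⁿ` of a point of the sphere. -/
noncomputable def sphereCoords (p : UnitSphere n) : ℝ × (Fin n → ℝ) := (euclideanCons n).symm p

theorem continuous_sphereCoords : Continuous (sphereCoords (n := n)) :=
  (euclideanCons n).symm.continuous.comp continuous_subtype_val

theorem sphereCoords_ne_zero (p : UnitSphere n) : sphereCoords p ≠ 0 := by
  simpa [sphereCoords] using ne_zero_of_mem_unit_sphere p

theorem toSphere_sphereCoords (p : UnitSphere n) : toSphere (sphereCoords p) = p := by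
  refine Subtype.ext ?_
  rw [coe_toSphere (sphereCoords_ne_zero p)]
  simp [sphereCoords]

theorem sphereCoords_spherePole : sphereCoords (spherePole n) = (1, 0) := by
  rw [sphereCoords, ← euclideanCons_one_zero, ContinuousLinearEquiv.symm_apply_apply]

theorem toSphere_of_pos {c : ℝ} (hc : 0 < c) :
    toSphere ((c, 0) : ℝ × (Fin n → ℝ)) = spherePole n := by
  have h : ((c, 0) : ℝ × (Fin n → ℝ)) = c • sphereCoords (spherePole n) := by
    simp [sphereCoords_spherePole]
  rw [h, toSphere_smul hc (sphereCoords_ne_zero _), toSphere_sphereCoords]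

/-- A deformation of `ℝ × ℝⁿ` that, for large `C`, carries every point away from the closed
negative half-axis onto the open positive half-axis. It turns maps whose boundary values merely
avoid the negative half-axis into loops at the base point. -/
noncomputable def pinch (C : ℝ) (y : ℝ × (Fin n → ℝ)) : ℝ × (Fin n → ℝ) :=
  (y.1 + C * ‖y.2‖, max 0 (1 - C * (y.1 + C * ‖y.2‖)) • y.2)

theorem pinch_ne_zero {C : ℝ} {y : ℝ × (Fin n → ℝ)} (hy : y ≠ 0) : pinch C y ≠ 0 := by
  intro h
  have h1 : y.1 + C * ‖y.2‖ = 0 := congrArg Prod.fst h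
  have h2 : y.2 = 0 := by simpa [pinch, h1] using congrArg Prod.snd h
  exact hy (Prod.ext (by simpa [h2] using h1) h2)

theorem pinch_zero (y : ℝ × (Fin n → ℝ)) : pinch 0 y = y := by
  simp [pinch]

theorem toSphere_pinch_of_one_le {C : ℝ} (hC : 0 ≤ C) {y : ℝ × (Fin n → ℝ)}
    (h : 1 ≤ C * (y.1 + C * ‖y.2‖)) : toSphere (pinch C y) = spherePole n := by
  rw [pinch, max_eq_left (by linarith), zero_smul]
  exact toSphere_of_pos (pos_of_mul_pos_right (zero_lt_one.trans_le h) hC)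

theorem toSphere_pinch_of_snd_eq_zero {C : ℝ} {y : ℝ × (Fin n → ℝ)} (h1 : 0 < y.1)
    (h2 : y.2 = 0) : toSphere (pinch C y) = spherePole n := by
  simpa [pinch, h2] using toSphere_of_pos h1

theorem continuous_pinch_comp {c : T → ℝ} (hc : Continuous c) (hG : Continuous G) :
    Continuous fun t ↦ pinch (c t) (G t) := by
  unfold pinch
  fun_prop

theorem one_le_mul_add_mul_of_le {C D a b : ℝ} (hC : 0 ≤ C) (hCD : C ≤ D) (hb : 0 ≤ b)
    (h : 1 ≤ C * (a + C * b)) : 1 ≤ D * (a + D * b) :=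
  have hpos : 0 < a + C * b := pos_of_mul_pos_right (zero_lt_one.trans_le h) hC
  calc 1 ≤ C * (a + C * b) := h
    _ ≤ D * (a + C * b) := by gcongr
    _ ≤ D * (a + D * b) := by have := hC.trans hCD; gcongr

theorem eventually_one_lt_mul_add_mul {a b : ℝ} (hb : 0 ≤ b) (h : b = 0 → 0 < a) :
    ∀ᶠ C : ℝ in atTop, 1 < C * (a + C * b) := by
  rcases hb.eq_or_lt with rfl | hb
  · simpa using (tendsto_id.atTop_mul_const (h rfl)).eventually_gt_atTop 1
  · exact (tendsto_id.atTop_mul_atTop₀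
      (tendsto_atTop_add_const_left _ a (tendsto_id.atTop_mul_const hb))).eventually_gt_atTop 1

theorem eventually_forall_one_le_mul_add_mul {K : Set T} (hK : IsCompact K) (hG : Continuous G)
    (h : ∀ t ∈ K, (G t).2 = 0 → 0 < (G t).1) :
    ∀ᶠ C : ℝ in atTop, ∀ t ∈ K, 1 ≤ C * ((G t).1 + C * ‖(G t).2‖) := by
  refine hK.induction_on (by simp)
    (fun s s' hs hs' ↦ hs'.mono fun C hC t ht ↦ hC t (hs ht)) (fun s s' hs hs' ↦ ?_)
    fun t ht ↦ ?_
  · filter_upwards [hs, hs'] with C hC hC' t ht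
    exact ht.elim (hC t) (hC' t)
  obtain ⟨C, hC, hC0⟩ := ((eventually_one_lt_mul_add_mul (norm_nonneg (G t).2)
    fun h0 ↦ h t ht (norm_eq_zero.mp h0)).and (eventually_ge_atTop 0)).exists
  have hopen : IsOpen {s | 1 < C * ((G s).1 + C * ‖(G s).2‖)} :=
    isOpen_lt continuous_const (by fun_prop)
  refine ⟨_, mem_nhdsWithin_of_mem_nhds (hopen.mem_nhds hC), ?_⟩
  filter_upwards [eventually_ge_atTop C] with D hD s hs
  exact one_le_mul_add_mul_of_le hC0 hD (norm_nonneg _) (le_of_lt hs)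

theorem eventually_toSphere_pinch_eq {K : Set T} (hK : IsCompact K) (hG : Continuous G)
    (h : ∀ t ∈ K, (G t).2 = 0 → 0 < (G t).1) :
    ∀ᶠ C : ℝ in atTop, ∀ t ∈ K, toSphere (pinch C (G t)) = spherePole n := by
  filter_upwards [eventually_forall_one_le_mul_add_mul hK hG h, eventually_ge_atTop 0]
    with C hC hC0 t ht
  exact toSphere_pinch_of_one_le hC0 (hC t ht)

end Pinch

section Cube

variable {n : ℕ}

/-- The unit cube as a subset of `ℝⁿ`. -/
def cube (n : ℕ) : Set (Fin n → ℝ) := {x | ∀ i, x i ∈ Set.Icc (0 : ℝ) 1}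

/-- The union of the hyperplanes that carry the faces of the unit cube; it meets the cube in its
boundary. -/
def cubeBoundary (n : ℕ) : Set (Fin n → ℝ) := {x | ∃ i, x i = 0 ∨ x i = 1}

theorem isCompact_cube : IsCompact (cube n) := by
  have : cube n = Set.Icc 0 1 := by
    ext x
    simp [cube, Set.mem_Icc, Pi.le_def, forall_and]
  rw [this]
  exact isCompact_Icc

theorem isClosed_cubeBoundary : IsClosed (cubeBoundary n) := by
  have : cubeBoundary n = ⋃ i, {x | x i = 0 ∨ x i = 1} := by
    ext x
    simp [cubeBoundary]
  rw [this]
  exact isClosed_iUnion_of_finite fun i ↦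
    (isClosed_eq (by fun_prop) (by fun_prop)).union (isClosed_eq (by fun_prop) (by fun_prop))

theorem isCompact_cube_inter_cubeBoundary : IsCompact (cube n ∩ cubeBoundary n) :=
  isCompact_cube.inter_right isClosed_cubeBoundary

/-- The inclusion of the cube in `ℝⁿ`. -/
def cubeCoe (y : I^(Fin n)) : Fin n → ℝ := fun i ↦ y i

/-- The coordinatewise retraction of `ℝⁿ` to the cube. -/
noncomputable def cubeProj (x : Fin n → ℝ) : I^(Fin n) :=
  fun i ↦ Set.projIcc 0 1 zero_le_one (x i)

@[fun_prop]
theorem continuous_cubeCoe : Continuous (cubeCoe (n := n)) := by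
  unfold cubeCoe
  fun_prop

@[fun_prop]
theorem continuous_cubeProj : Continuous (cubeProj (n := n)) := by
  unfold cubeProj
  fun_prop

theorem cubeCoe_mem_cube (y : I^(Fin n)) : cubeCoe y ∈ cube n := fun i ↦ (y i).2

theorem cubeCoe_mem_cubeBoundary {y : I^(Fin n)} (h : y ∈ Cube.boundary (Fin n)) :
    cubeCoe y ∈ cubeBoundary n := by
  simpa [cubeBoundary, cubeCoe, Cube.boundary] using h

theorem cubeProj_cubeCoe (y : I^(Fin n)) : cubeProj (cubeCoe y) = y := by
  funext i
  simp [cubeProj, cubeCoe]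

theorem cubeProj_mem_boundary {x : Fin n → ℝ} (hx : x ∈ cubeBoundary n) :
    cubeProj x ∈ Cube.boundary (Fin n) := by
  obtain ⟨i, hi⟩ := hx
  refine ⟨i, hi.imp ?_ ?_⟩ <;> intro h <;> simp [cubeProj, h]

theorem cubeCoe_cubeProj {x : Fin n → ℝ} (hx : x ∈ cube n) : cubeCoe (cubeProj x) = x := by
  funext i
  simp [cubeCoe, cubeProj, Set.projIcc_of_mem _ (hx i)]

/-- The affine map `x_i ↦ α + β x_i` of the `i`-th coordinate. -/
def axisMap (i : Fin n) (α β : ℝ) (x : Fin n → ℝ) : Fin n → ℝ :=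
  Function.update x i (α + β * x i)

theorem axisMap_cubeCoe {i : Fin n} {α β : ℝ} {y : I^(Fin n)} {s : I}
    (hs : (s : ℝ) = α + β * y i) :
    axisMap i α β (cubeCoe y) = cubeCoe (Function.update y i s) := by
  funext k
  rcases eq_or_ne k i with rfl | hk <;> simp [axisMap, cubeCoe, *]

end Cube

section HasClass

variable {n : ℕ} {F G : (Fin n → ℝ) → ℝ × (Fin n → ℝ)}

/-- The maps to `ℝ × ℝⁿ` that represent an element of `π_n(Sⁿ)`: they do not vanish on the cube
and avoid the closed negative half-axis on its boundary. -/
structure Admissible (F : (Fin n → ℝ) → ℝ × (Fin n → ℝ)) : Prop where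
  continuous : Continuous F
  ne_zero : ∀ x ∈ cube n, F x ≠ 0
  fst_pos : ∀ x ∈ cube n, x ∈ cubeBoundary n → (F x).2 = 0 → 0 < (F x).1

/-- `HasClass F a` says that `a` is the element of `π_n(Sⁿ)` represented by the radial projection
of `F`, after pinching its boundary values to the base point. -/
def HasClass (F : (Fin n → ℝ) → ℝ × (Fin n → ℝ))
    (a : HomotopyGroup (Fin n) (UnitSphere n) (spherePole n)) : Prop :=
  ∀ᶠ C : ℝ in atTop, ∃ g : Ω^ (Fin n) (UnitSphere n) (spherePole n),
    (∀ y, g y = toSphere (pinch C (F (cubeCoe y)))) ∧ loopClass g = a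

theorem HasClass.unique {a b} (ha : HasClass F a) (hb : HasClass F b) : a = b := by
  obtain ⟨C, ⟨g, hg, rfl⟩, g', hg', rfl⟩ := (ha.and hb).exists
  exact congrArg loopClass (GenLoop.ext _ _ fun y ↦ (hg y).trans (hg' y).symm)

theorem exists_loopClass_eq_of_homotopy {H : I × (I^(Fin n)) → ℝ × (Fin n → ℝ)}
    (hH : Continuous H) (hne : ∀ z, H z ≠ 0)
    (hb : ∀ t, ∀ y ∈ Cube.boundary (Fin n), toSphere (H (t, y)) = spherePole n) :
    ∃ g₀ g₁ : Ω^ (Fin n) (UnitSphere n) (spherePole n),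
      (∀ y, g₀ y = toSphere (H (0, y))) ∧ (∀ y, g₁ y = toSphere (H (1, y))) ∧
        loopClass g₀ = loopClass g₁ := by
  have hcont : Continuous fun z ↦ toSphere (H z) := continuous_toSphere_comp hH hne
  let g (t : I) : Ω^ (Fin n) (UnitSphere n) (spherePole n) :=
    ⟨⟨fun y ↦ toSphere (H (t, y)), hcont.comp (by fun_prop)⟩, hb t⟩
  exact ⟨g 0, g 1, fun _ ↦ rfl, fun _ ↦ rfl,
    loopClass_eq_iff.mpr ⟨_, hcont, fun _ ↦ rfl, fun _ ↦ rfl, hb⟩⟩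

theorem Admissible.exists_hasClass (hF : Admissible F) : ∃ a, HasClass F a := by
  obtain ⟨C₀, hC₀⟩ := eventually_atTop.mp (eventually_toSphere_pinch_eq
    isCompact_cube_inter_cubeBoundary hF.continuous fun x hx ↦ hF.fst_pos x hx.1 hx.2)
  have hloops {C : ℝ} (hC : C₀ ≤ C) := exists_loopClass_eq_of_homotopy
    (H := fun z ↦ pinch (C₀ + z.1 * (C - C₀)) (F (cubeCoe z.2)))
    (continuous_pinch_comp (by fun_prop) (hF.continuous.comp (by fun_prop)))
    (fun z ↦ pinch_ne_zero (hF.ne_zero _ (cubeCoe_mem_cube z.2)))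
    fun t y hy ↦ hC₀ _
      (le_add_of_nonneg_right (mul_nonneg t.2.1 (sub_nonneg.mpr hC))) _
      ⟨cubeCoe_mem_cube y, cubeCoe_mem_cubeBoundary hy⟩
  obtain ⟨g, -, hg, -, -⟩ := hloops le_rfl
  refine ⟨loopClass g, ?_⟩
  filter_upwards [eventually_ge_atTop C₀] with C hC
  obtain ⟨g₀, g₁, h₀, h₁, h⟩ := hloops hC
  have hg₀ : g₀ = g := GenLoop.ext _ _ fun y ↦ by rw [h₀, hg]; simp
  exact ⟨g₁, fun y ↦ by rw [h₁]; simp, by rw [← h, hg₀]⟩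

theorem HasClass.homotopy {G : ℝ → (Fin n → ℝ) → ℝ × (Fin n → ℝ)}
    (hG : Continuous fun z : ℝ × (Fin n → ℝ) ↦ G z.1 z.2)
    (hadm : ∀ t ∈ Set.Icc (0 : ℝ) 1, Admissible (G t)) {a} (ha : HasClass (G 0) a) :
    HasClass (G 1) a := by
  have hbd := eventually_toSphere_pinch_eq
    (isCompact_Icc.prod isCompact_cube_inter_cubeBoundary) hG
    fun z hz ↦ (hadm z.1 hz.1).fst_pos z.2 hz.2.1 hz.2.2
  filter_upwards [ha, hbd] with C ⟨g, hg, hga⟩ hC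
  obtain ⟨g₀, g₁, h₀, h₁, h⟩ := exists_loopClass_eq_of_homotopy
    (H := fun z ↦ pinch C (G z.1 (cubeCoe z.2)))
    (continuous_pinch_comp continuous_const
      (hG.comp (f := fun z : I × (I^(Fin n)) ↦ ((z.1 : ℝ), cubeCoe z.2)) (by fun_prop)))
    (fun z ↦ pinch_ne_zero ((hadm z.1 z.1.2).ne_zero _ (cubeCoe_mem_cube z.2)))
    fun t y hy ↦ hC (t, cubeCoe y) ⟨t.2, cubeCoe_mem_cube y, cubeCoe_mem_cubeBoundary hy⟩
  have hg₀ : g₀ = g := GenLoop.ext _ _ fun y ↦ (h₀ y).trans (hg y).symm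
  exact ⟨g₁, h₁, by rw [← h, hg₀, hga]⟩

theorem hasClass_sphereCoords_comp (f : Ω^ (Fin n) (UnitSphere n) (spherePole n)) :
    HasClass (fun x ↦ sphereCoords (f (cubeProj x))) (loopClass f) := by
  refine Eventually.of_forall fun C ↦ ?_
  obtain ⟨g₀, g₁, h₀, h₁, h⟩ := exists_loopClass_eq_of_homotopy
    (H := fun z ↦ pinch (z.1 * C) (sphereCoords (f z.2)))
    (continuous_pinch_comp (by fun_prop)
      (continuous_sphereCoords.comp ((map_continuous f).comp continuous_snd)))
    (fun z ↦ pinch_ne_zero (sphereCoords_ne_zero _))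
    fun t y hy ↦ by
      rw [GenLoop.boundary f y hy, sphereCoords_spherePole]
      exact toSphere_pinch_of_snd_eq_zero one_pos rfl
  have hf : g₀ = f := GenLoop.ext _ _ fun y ↦ by
    rw [h₀]
    simp [pinch_zero, toSphere_sphereCoords]
  exact ⟨g₁, fun y ↦ by rw [h₁]; simp [cubeProj_cubeCoe], by rw [← h, hf]⟩

theorem HasClass.of_admissible_line (hF : Continuous F) (hG : Continuous G)
    (hadm : ∀ t ∈ Set.Icc (0 : ℝ) 1, Admissible fun x ↦ (1 - t) • F x + t • G x) {a}
    (ha : HasClass F a) : HasClass G a := by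
  simpa using HasClass.homotopy (G := fun t x ↦ (1 - t) • F x + t • G x) (by fun_prop) hadm
    (by simpa using ha)

theorem one_sub_mul_add_mul_pos {t u v : ℝ} (ht : t ∈ Set.Icc (0 : ℝ) 1) (hu : 0 < u)
    (hv : 0 < v) : 0 < (1 - t) * u + t * v :=
  (convex_Ioi (0 : ℝ)) hu hv (sub_nonneg.mpr ht.2) ht.1 (sub_add_cancel 1 t)

theorem HasClass.line (hF : Continuous F) (hG : Continuous G)
    (h : ∀ x ∈ cube n, (∀ t ∈ Set.Icc (0 : ℝ) 1, (1 - t) • (F x).2 + t • (G x).2 ≠ 0) ∨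
      (0 < (F x).1 ∧ 0 < (G x).1) ∨ (x ∉ cubeBoundary n ∧ (F x).1 < 0 ∧ (G x).1 < 0))
    {a} (ha : HasClass F a) : HasClass G a := by
  have hneg {t : ℝ} (ht : t ∈ Set.Icc (0 : ℝ) 1) {u v : ℝ} (hu : u < 0) (hv : v < 0) :
      (1 - t) * u + t * v < 0 :=
    (convex_Iio (0 : ℝ)) hu hv (sub_nonneg.mpr ht.2) ht.1 (by ring)
  have hadm (t : ℝ) (ht : t ∈ Set.Icc (0 : ℝ) 1) :
      Admissible fun x ↦ (1 - t) • F x + t • G x := by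
    refine ⟨by fun_prop, fun x hx h0 ↦ ?_, fun x hx hb h0 ↦ ?_⟩
    · rcases h x hx with h | h | h
      · exact h t ht (congrArg Prod.snd h0)
      · exact (one_sub_mul_add_mul_pos ht h.1 h.2).ne' (congrArg Prod.fst h0)
      · exact (hneg ht h.2.1 h.2.2).ne (congrArg Prod.fst h0)
    · rcases h x hx with h | h | h
      · exact absurd h0 (h t ht)
      · exact one_sub_mul_add_mul_pos ht h.1 h.2
      · exact absurd hb h.1
  exact ha.of_admissible_line hF hG hadm

variable [Nonempty (Fin n)]

theorem hasClass_one (hF : Continuous F) (h : ∀ x ∈ cube n, (F x).2 = 0 → 0 < (F x).1) :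
    HasClass F 1 := by
  filter_upwards [eventually_toSphere_pinch_eq isCompact_cube hF h] with C hC
  exact ⟨const, fun y ↦ (hC _ (cubeCoe_mem_cube y)).symm, loopClass_const⟩

theorem HasClass.reflect (i : Fin n) {a} (h : HasClass F a) :
    HasClass (fun x ↦ F (axisMap i 1 (-1) x)) a⁻¹ := by
  filter_upwards [h] with C ⟨g, hg, hga⟩
  refine ⟨symmAt i g, fun y ↦ ?_, by rw [← loopClass_inv, hga]⟩
  rw [symmAt_apply, hg, axisMap_cubeCoe (s := σ (y i)) (by simp [sub_eq_add_neg])]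

theorem HasClass.split (hF : Admissible F) (i : Fin n) {t : ℝ} (ht : t ∈ Set.Icc (0 : ℝ) 1)
    {a b} (ha : HasClass (fun x ↦ F (axisMap i 0 t x)) a)
    (hb : HasClass (fun x ↦ F (axisMap i t (1 - t) x)) b) : HasClass F (b * a) := by
  obtain ⟨c, hc⟩ := hF.exists_hasClass
  obtain ⟨C, ⟨g, hg, rfl⟩, ⟨gl, hgl, rfl⟩, gr, hgr, rfl⟩ := (hc.and (ha.and hb)).exists
  rwa [← loopClass_eq_mul_of_restrict i ⟨t, ht⟩ (f := g) (fl := gl) (fr := gr) (fun y ↦ ?_)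
    fun y ↦ ?_]
  · have hs : ((⟨t, ht⟩ * y i : I) : ℝ) = 0 + t * y i := by simp
    rw [hg, hgl, ← axisMap_cubeCoe hs]
  · have hs : ((σ (σ ⟨t, ht⟩ * σ (y i)) : I) : ℝ) = t + (1 - t) * y i := by
      simp only [unitInterval.coe_symm_eq, Set.Icc.coe_mul]
      ring
    rw [hg, hgr, ← axisMap_cubeCoe hs]

end HasClass

section Householder

variable {m : Type*} [Fintype m] [DecidableEq m]

/-- The matrix of the reflection in the hyperplane orthogonal to `u`; it is `1` if `u = 0`. -/
noncomputable def householder (u : m → ℝ) : Matrix m m ℝ :=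
  1 - (2 / (u ⬝ᵥ u)) • vecMulVec u u

theorem householder_transpose (u : m → ℝ) : (householder u)ᵀ = householder u := by
  simp [householder, transpose_vecMulVec]

theorem householder_mulVec (u v : m → ℝ) :
    householder u *ᵥ v = v - (2 * (u ⬝ᵥ v) / (u ⬝ᵥ u)) • u := by
  rw [householder, sub_mulVec, one_mulVec, smul_mulVec, vecMulVec_mulVec, op_smul_eq_smul,
    smul_smul, div_mul_eq_mul_div]

theorem householder_mul_self {u : m → ℝ} (hu : u ≠ 0) : householder u * householder u = 1 := by
  have huu : u ⬝ᵥ u ≠ 0 := by rwa [Ne, dotProduct_self_eq_zero]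
  refine ext_of_mulVec_single fun i ↦ ?_
  rw [← mulVec_mulVec, householder_mulVec, householder_mulVec, one_mulVec, dotProduct_sub,
    dotProduct_smul, smul_eq_mul, div_mul_cancel₀ _ huu, sub_sub, ← add_smul]
  simp only [sub_eq_self, smul_eq_zero]
  left
  ring

theorem det_householder {u : m → ℝ} (hu : u ≠ 0) : (householder u).det = -1 := by
  have huu : u ⬝ᵥ u ≠ 0 := by rwa [Ne, dotProduct_self_eq_zero]
  have hrank : householder u = 1 + replicateCol Unit ((-(2 / (u ⬝ᵥ u))) • u) *
      replicateRow Unit u := by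
    rw [householder, ← vecMulVec_eq, smul_vecMulVec, neg_smul, sub_eq_add_neg]
  rw [hrank, det_one_add_replicateCol_mul_replicateRow, dotProduct_smul, smul_eq_mul]
  field_simp
  norm_num

theorem continuous_householder_comp {T : Type*} [TopologicalSpace T] {u : T → m → ℝ}
    (hu : Continuous u) (h : ∀ t, u t ≠ 0) : Continuous fun t ↦ householder (u t) := by
  have huu : Continuous fun t ↦ u t ⬝ᵥ u t := hu.dotProduct hu
  exact continuous_const.sub ((continuous_const.div huu fun t ↦ by
    simpa [dotProduct_self_eq_zero] using h t).smul (hu.matrix_vecMulVec hu))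

theorem householder_single (i : m) :
    householder (Pi.single i (1 : ℝ)) = diagonal (Pi.mulSingle i (-1)) := by
  ext a b
  by_cases hab : a = b <;> by_cases ha : a = i <;>
    simp_all [householder, vecMulVec_apply, Pi.single_apply, one_apply]
  norm_num

end Householder

section InvertiblePath

variable {m : Type*} [Fintype m] [DecidableEq m]

theorem joinedIn_det_ne_zero_of_line {f : ℝ → Matrix m m ℝ} (hf : Continuous f)
    (h : ∀ t ∈ Set.Icc (0 : ℝ) 1, (f t).det ≠ 0) :
    JoinedIn {M : Matrix m m ℝ | M.det ≠ 0} (f 0) (f 1) :=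
  JoinedIn.ofLine hf.continuousOn rfl rfl (Set.image_subset_iff.mpr h)

theorem det_diagonal_mulSingle (i : m) (c : ℝ) : (diagonal (Pi.mulSingle i c)).det = c := by
  simp [det_diagonal]

theorem joinedIn_diagonal_mulSingle_neg_one (i k : m) :
    JoinedIn {M : Matrix m m ℝ | M.det ≠ 0} (diagonal (Pi.mulSingle k (-1)))
      (diagonal (Pi.mulSingle i (-1))) := by
  rcases eq_or_ne i k with rfl | hik
  · exact JoinedIn.refl (by simp)
  let u (t : ℝ) : m → ℝ := (1 - t) • Pi.single k 1 + t • Pi.single i 1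
  have hu (t : ℝ) : u t ≠ 0 := fun h ↦ by
    have hi : t = 0 := by simpa [u, hik] using congrFun h i
    simpa [u, hik.symm, hi] using congrFun h k
  simpa [u, householder_single] using joinedIn_det_ne_zero_of_line
    (continuous_householder_comp (u := u) (by fun_prop) hu)
    fun t _ ↦ by simp [det_householder (hu t)]

theorem joinedIn_diagonal_mulSingle (i k : m) {c : ℝ} (hc : c ≠ 0) :
    JoinedIn {M : Matrix m m ℝ | M.det ≠ 0} (diagonal (Pi.mulSingle k c))
      (diagonal (Pi.mulSingle i (SignType.sign c : ℝ))) := by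
  have hscale : JoinedIn {M : Matrix m m ℝ | M.det ≠ 0} (diagonal (Pi.mulSingle k c))
      (diagonal (Pi.mulSingle k (SignType.sign c : ℝ))) := by
    have hline := joinedIn_det_ne_zero_of_line
      (f := fun t ↦ diagonal (Pi.mulSingle k ((1 - t) * c + t * SignType.sign c)))
      (Continuous.matrix_diagonal (continuous_const.update k (by fun_prop))) fun t ht ↦ ?_
    · simpa using hline
    rw [det_diagonal_mulSingle]
    rcases hc.lt_or_gt with hc | hc
    · exact ((convex_Iio (0 : ℝ)) hc (by simp [sign_neg hc])
        (sub_nonneg.mpr ht.2) ht.1 (by ring)).ne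
    · exact ((convex_Ioi (0 : ℝ)) hc (by simp [sign_pos hc])
        (sub_nonneg.mpr ht.2) ht.1 (by ring)).ne'
  refine hscale.trans ?_
  rcases hc.lt_or_gt with hc | hc
  · simpa [sign_neg hc] using joinedIn_diagonal_mulSingle_neg_one i k
  · simpa [sign_pos hc] using JoinedIn.refl (by simp)

theorem joinedIn_transvection {i j : m} (hij : i ≠ j) (c : ℝ) :
    JoinedIn {M : Matrix m m ℝ | M.det ≠ 0} (transvection i j c) 1 := by
  have hcont : Continuous fun t : ℝ ↦ transvection i j ((1 - t) * c) := by
    refine continuous_const.add (continuous_matrix fun a b ↦ ?_)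
    simp only [single_apply]
    split_ifs <;> fun_prop
  simpa using joinedIn_det_ne_zero_of_line hcont fun t _ ↦ by
    simp [det_transvection_of_ne _ _ hij]

theorem joinedIn_det_ne_zero (i : m) {M : Matrix m m ℝ} (hM : M.det ≠ 0) :
    JoinedIn {M : Matrix m m ℝ | M.det ≠ 0} M
      (diagonal (Pi.mulSingle i (SignType.sign M.det : ℝ))) := by
  let P (M : Matrix m m ℝ) : Prop := JoinedIn {M : Matrix m m ℝ | M.det ≠ 0} M
    (diagonal (Pi.mulSingle i (SignType.sign M.det : ℝ)))
  have hdiag (d d' : m → ℝ) : diagonal (d * d') = diagonal d * diagonal d' :=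
    (diagonal_mul_diagonal d d').symm
  have hmul {A B : Matrix m m ℝ} (hA : P A) (hB : P B) : P (A * B) := by
    simp only [P]
    rw [det_mul, sign_mul, SignType.coe_mul, Pi.mulSingle_mul, hdiag]
    refine (hA.mul hB).mono ?_
    rintro _ ⟨A', hA', B', hB', rfl⟩
    simpa using ⟨hA', hB'⟩
  refine diagonal_transvection_induction_of_det_ne_zero P M hM (fun d hd ↦ ?_) (fun t ↦ ?_)
    fun A B _ _ ↦ hmul
  · rw [det_diagonal, Finset.prod_ne_zero_iff] at hd
    rw [← Finset.univ_prod_mulSingle d]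
    refine Finset.prod_induction _ (fun d ↦ P (diagonal d))
      (fun a b ha hb ↦ by simpa only [hdiag] using hmul ha hb)
      (by simpa [P] using JoinedIn.refl (by simp)) fun k hk ↦ ?_
    simpa only [P, det_diagonal_mulSingle] using joinedIn_diagonal_mulSingle i k (hd k hk)
  · simpa [P, TransvectionStruct.toMatrix, det_transvection_of_ne _ _ t.hij] using
      joinedIn_transvection t.hij t.c

end InvertiblePath

section LinearModel

variable {n : ℕ} {A B : Matrix (Fin n) (Fin n) ℝ} {x₀ x₁ : Fin n → ℝ}

/-- The interior of the unit cube of `ℝⁿ`. -/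
def openCube (n : ℕ) : Set (Fin n → ℝ) := {x | ∀ i, x i ∈ Set.Ioo (0 : ℝ) 1}

theorem openCube_subset_cube : openCube n ⊆ cube n := fun _ hx i ↦ Set.Ioo_subset_Icc_self (hx i)

theorem notMem_cubeBoundary {x : Fin n → ℝ} (hx : x ∈ openCube n) : x ∉ cubeBoundary n :=
  fun ⟨i, hi⟩ ↦ hi.elim (hx i).1.ne' (hx i).2.ne

theorem mem_openCube {x : Fin n → ℝ} (hx : x ∈ cube n) (hb : x ∉ cubeBoundary n) :
    x ∈ openCube n :=
  fun i ↦ ⟨(hx i).1.lt_of_ne fun h ↦ hb ⟨i, Or.inl h.symm⟩,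
    (hx i).2.lt_of_ne fun h ↦ hb ⟨i, Or.inr h⟩⟩

/-- The model of a map `ℝⁿ → ℝ × ℝⁿ` whose radial projection takes the value `(-1, 0)` exactly at
`x₀`, with linear part `A` there. -/
def linearModel (A : Matrix (Fin n) (Fin n) ℝ) (x₀ x : Fin n → ℝ) : ℝ × (Fin n → ℝ) :=
  (-1, A *ᵥ (x - x₀))

theorem admissible_linearModel (hA : A.det ≠ 0) (hx₀ : x₀ ∈ openCube n) :
    Admissible (linearModel A x₀) where
  continuous := by
    unfold linearModel
    fun_prop
  ne_zero x _ h := by simpa [linearModel] using congrArg Prod.fst h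
  fst_pos x _ hb h := by
    obtain rfl : x = x₀ := sub_eq_zero.mp (eq_zero_of_mulVec_eq_zero hA h)
    exact absurd hb (notMem_cubeBoundary hx₀)

theorem HasClass.linearModel_of_joinedIn
    (h : JoinedIn {M : Matrix (Fin n) (Fin n) ℝ | M.det ≠ 0} A B) (hx₀ : x₀ ∈ openCube n)
    (hx₁ : x₁ ∈ openCube n) {a} (ha : HasClass (linearModel A x₀) a) :
    HasClass (linearModel B x₁) a := by
  have hx {t : ℝ} (ht : t ∈ Set.Icc (0 : ℝ) 1) : (1 - t) • x₀ + t • x₁ ∈ openCube n :=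
    fun i ↦ (convex_Ioo (0 : ℝ) 1) (hx₀ i) (hx₁ i) (sub_nonneg.mpr ht.2) ht.1 (by ring)
  have hdet {t : ℝ} (ht : t ∈ Set.Icc (0 : ℝ) 1) : (h.somePath.extend t).det ≠ 0 := by
    rw [Path.extend_apply _ ht]
    exact h.somePath_mem _
  have hhom := HasClass.homotopy
    (G := fun t ↦ linearModel (h.somePath.extend t) ((1 - t) • x₀ + t • x₁))
    (continuous_const.prodMk
      ((h.somePath.continuous_extend.comp continuous_fst).matrix_mulVec (by fun_prop)))
    (fun t ht ↦ admissible_linearModel (hdet ht) (hx ht)) (a := a) (by simpa using ha)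
  simpa using hhom

theorem const_half_mem_openCube : (fun _ ↦ 1 / 2 : Fin n → ℝ) ∈ openCube n :=
  fun _ ↦ by norm_num

/-- The generator `ι_n` of `π_n(Sⁿ)`, represented by the map `x ↦ (-1, x - c)` on the cube with
centre `c`. -/
noncomputable def fundamentalClass (n : ℕ) :
    HomotopyGroup (Fin n) (UnitSphere n) (spherePole n) :=
  (admissible_linearModel (A := 1) (by simp) const_half_mem_openCube).exists_hasClass.choose

theorem hasClass_fundamentalClass :
    HasClass (linearModel 1 fun _ ↦ 1 / 2) (fundamentalClass n) :=
  (admissible_linearModel (A := 1) (by simp) const_half_mem_openCube).exists_hasClass.choose_spec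

variable [Nonempty (Fin n)]

theorem hasClass_linearModel (hA : A.det ≠ 0) (hx₀ : x₀ ∈ openCube n) :
    HasClass (linearModel A x₀) (fundamentalClass n ^ (SignType.sign A.det : ℤ)) := by
  let i : Fin n := Classical.arbitrary _
  refine HasClass.linearModel_of_joinedIn (joinedIn_det_ne_zero i hA).symm
    const_half_mem_openCube hx₀ ?_
  rcases hA.lt_or_gt with hA | hA
  · have hreflect : linearModel (diagonal (Pi.mulSingle i (-1))) (fun _ : Fin n ↦ 1 / 2) =
        fun x ↦ linearModel 1 (fun _ ↦ 1 / 2) (axisMap i 1 (-1) x) := by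
      funext x
      refine Prod.ext rfl (funext fun k ↦ ?_)
      simp only [linearModel, axisMap, mulVec_diagonal, one_mulVec]
      rcases eq_or_ne k i with rfl | hk
      · simp only [Pi.mulSingle_eq_same, Pi.sub_apply, Function.update_self]
        ring
      · simp [hk]
    have hclass := hasClass_fundamentalClass.reflect i
    rw [← hreflect] at hclass
    simpa [sign_neg hA] using hclass
  · simpa [sign_pos hA] using hasClass_fundamentalClass

end LinearModel

section SingleZero

theorem eventually_line_ne_zero_of_hasFDerivAt {E E' : Type*} [NormedAddCommGroup E]
    [NormedSpace ℝ E] [NormedAddCommGroup E'] [NormedSpace ℝ E'] {f : E → E'} {D : E →L[ℝ] E'}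
    {x₀ : E} {K : NNReal} (hf : HasFDerivAt f D x₀) (h0 : f x₀ = 0) (hD : AntilipschitzWith K D) :
    ∀ᶠ x in 𝓝 x₀, x ≠ x₀ → ∀ t ∈ Set.Icc (0 : ℝ) 1, (1 - t) • D (x - x₀) + t • f x ≠ 0 := by
  have hlo : (fun x ↦ f x - D (x - x₀)) =o[𝓝 x₀] fun x ↦ D (x - x₀) := by
    have := hf.isLittleO
    simp only [h0, sub_zero] at this
    exact this.trans_isBigO <| Asymptotics.IsBigO.of_bound K <| Eventually.of_forall fun x ↦ by
      simpa using hD.le_mul_dist (x - x₀) 0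
  filter_upwards [hlo.def (half_pos one_pos)] with x hx hne t ht hzero
  have hD0 : D (x - x₀) = -(t • (f x - D (x - x₀))) := by
    rw [eq_neg_iff_add_eq_zero, ← hzero]
    module
  have hle : ‖D (x - x₀)‖ ≤ 1 / 2 * ‖D (x - x₀)‖ :=
    calc ‖D (x - x₀)‖ = t * ‖f x - D (x - x₀)‖ := by
          nth_rewrite 1 [hD0]
          rw [norm_neg, norm_smul, Real.norm_of_nonneg ht.1]
      _ ≤ ‖f x - D (x - x₀)‖ := mul_le_of_le_one_left (norm_nonneg _) ht.2
      _ ≤ 1 / 2 * ‖D (x - x₀)‖ := hx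
  have : D (x - x₀) = D 0 := by
    rw [map_zero, ← norm_le_zero_iff]
    linarith
  exact hne (sub_eq_zero.mp (hD.injective this))

variable {n : ℕ} {F G : (Fin n → ℝ) → ℝ × (Fin n → ℝ)} {x : Fin n → ℝ}
  {a : HomotopyGroup (Fin n) (UnitSphere n) (spherePole n)}

/-- The points of the cube that the radial projection of `F` sends to the pole `(-1, 0)` opposite
to the base point. -/
def southFiber (F : (Fin n → ℝ) → ℝ × (Fin n → ℝ)) : Set (Fin n → ℝ) :=
  {x | x ∈ cube n ∧ (F x).2 = 0 ∧ (F x).1 < 0}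

theorem Admissible.southFiber_subset_openCube (hF : Admissible F) :
    southFiber F ⊆ openCube n := fun x hx ↦
  mem_openCube hx.1 fun hb ↦ (hF.fst_pos x hx.1 hb hx.2.1).not_gt hx.2.2

theorem Admissible.mem_southFiber_or_pos (hF : Admissible F) (hx : x ∈ cube n)
    (h0 : (F x).2 = 0) : x ∈ southFiber F ∨ 0 < (F x).1 := by
  rcases lt_trichotomy (F x).1 0 with h | h | h
  · exact Or.inl ⟨hx, h0, h⟩
  · exact absurd (Prod.ext h h0) (hF.ne_zero x hx)
  · exact Or.inr h

theorem Admissible.isCompact_southFiber (hF : Admissible F) : IsCompact (southFiber F) := by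
  have h : southFiber F = cube n ∩ {x | (F x).2 = 0 ∧ (F x).1 ≤ 0} := by
    ext x
    refine and_congr_right fun hx ↦ and_congr_right fun h2 ↦ ⟨le_of_lt, fun h1 ↦ ?_⟩
    exact h1.lt_of_ne fun h1 ↦ hF.ne_zero x hx (Prod.ext h1 h2)
  rw [h]
  exact isCompact_cube.inter_right ((isClosed_eq hF.continuous.snd continuous_const).inter
    (isClosed_le hF.continuous.fst continuous_const))

/-- The map obtained from `F` by raising the first coordinate in proportion to the norm of the
others, which makes it positive away from `southFiber F`. -/
noncomputable def cone (C : ℝ) (F : (Fin n → ℝ) → ℝ × (Fin n → ℝ)) (x : Fin n → ℝ) :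
    ℝ × (Fin n → ℝ) :=
  ((F x).1 + C * ‖(F x).2‖, (F x).2)

theorem continuous_cone {C : ℝ} (hF : Continuous F) : Continuous (cone C F) := by
  unfold cone
  fun_prop

theorem hasClass_cone (hF : Admissible F) (C : ℝ) (ha : HasClass F a) :
    HasClass (cone C F) a := by
  refine ha.line hF.continuous (continuous_cone hF.continuous) fun x hx ↦ ?_
  by_cases h0 : (F x).2 = 0
  · have h1 : (cone C F x).1 = (F x).1 := by simp [cone, h0]
    rw [h1]
    rcases hF.mem_southFiber_or_pos hx h0 with h | h
    · exact Or.inr (Or.inr ⟨notMem_cubeBoundary (hF.southFiber_subset_openCube h), h.2.2, h.2.2⟩)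
    · exact Or.inr (Or.inl ⟨h, h⟩)
  · exact Or.inl fun t _ ↦ by simpa [cone, ← add_smul] using h0

theorem HasClass.of_cone (hF : Admissible F) {C : ℝ} (ha : HasClass (cone C F) a) :
    HasClass F a := by
  obtain ⟨b, hb⟩ := hF.exists_hasClass
  rwa [ha.unique (hasClass_cone hF C hb)]

theorem HasClass.of_line_on_nhds (hF : Admissible F) (hG : Admissible G) {U : Set (Fin n → ℝ)}
    (hU : IsOpen U) (hFU : southFiber F ⊆ U) (hGU : southFiber G ⊆ U)
    (h : ∀ x ∈ U, (∀ t ∈ Set.Icc (0 : ℝ) 1, (1 - t) • (F x).2 + t • (G x).2 ≠ 0) ∨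
      (x ∈ southFiber F ∧ x ∈ southFiber G)) (ha : HasClass F a) : HasClass G a := by
  have hK : IsCompact (cube n \ U) := isCompact_cube.diff hU
  have hpos {H : (Fin n → ℝ) → ℝ × (Fin n → ℝ)} (hH : Admissible H) (hHU : southFiber H ⊆ U) :=
    eventually_forall_one_le_mul_add_mul hK hH.continuous fun x hx h0 ↦
      (hH.mem_southFiber_or_pos hx.1 h0).resolve_left fun hmem ↦ hx.2 (hHU hmem)
  obtain ⟨C, ⟨hCF, hCG⟩, hC⟩ :=
    (((hpos hF hFU).and (hpos hG hGU)).and (eventually_ge_atTop 0)).exists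
  have hC' {b : ℝ} (h : 1 ≤ C * b) : 0 < b := pos_of_mul_pos_right (zero_lt_one.trans_le h) hC
  refine HasClass.of_cone hG (C := C) <| (hasClass_cone hF C ha).line
    (continuous_cone hF.continuous) (continuous_cone hG.continuous) fun x hx ↦ ?_
  by_cases hxU : x ∈ U
  · rcases h x hxU with h | ⟨hxF, hxG⟩
    · exact Or.inl h
    · refine Or.inr (Or.inr ⟨notMem_cubeBoundary (hF.southFiber_subset_openCube hxF), ?_, ?_⟩)
      · simpa [cone, hxF.2.1] using hxF.2.2
      · simpa [cone, hxG.2.1] using hxG.2.2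
  · exact Or.inr (Or.inl ⟨hC' (hCF x ⟨hx, hxU⟩), hC' (hCG x ⟨hx, hxU⟩)⟩)

theorem southFiber_linearModel {A : Matrix (Fin n) (Fin n) ℝ} (hA : A.det ≠ 0)
    (hx : x ∈ openCube n) : southFiber (linearModel A x) = {x} := by
  refine Set.eq_singleton_iff_unique_mem.mpr ⟨⟨openCube_subset_cube hx, ?_⟩, fun z hz ↦ ?_⟩
  · simp [linearModel]
  · exact sub_eq_zero.mp (eq_zero_of_mulVec_eq_zero hA hz.2.1)

theorem HasClass.of_southFiber_eq_singleton [Nonempty (Fin n)] (hF : Admissible F)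
    (hx : southFiber F = {x}) {D : (Fin n → ℝ) →L[ℝ] (Fin n → ℝ)}
    (hD : HasFDerivAt (fun x ↦ (F x).2) D x) (hdet : D.det ≠ 0) :
    HasClass F (fundamentalClass n ^ (SignType.sign D.det : ℤ)) := by
  have hmem : x ∈ southFiber F := hx ▸ Set.mem_singleton x
  have hxo := hF.southFiber_subset_openCube hmem
  set A := LinearMap.toMatrix' (D : (Fin n → ℝ) →ₗ[ℝ] (Fin n → ℝ))
  have hA : A.det = D.det := LinearMap.det_toMatrix' _
  have hAD (v : Fin n → ℝ) : A *ᵥ v = D v := LinearMap.toMatrix'_mulVec _ v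
  rw [← hA] at hdet ⊢
  have hL := southFiber_linearModel hdet hxo
  obtain ⟨r, hr, hball⟩ := Metric.eventually_nhds_iff_ball.mp
    (eventually_line_ne_zero_of_hasFDerivAt hD hmem.2.1
      (D.toContinuousLinearEquivOfDetNeZero (hA ▸ hdet)).antilipschitz)
  have hxr : {x} ⊆ Metric.ball x r := Set.singleton_subset_iff.mpr (Metric.mem_ball_self hr)
  refine (hasClass_linearModel hdet hxo).of_line_on_nhds (admissible_linearModel hdet hxo) hF
    Metric.isOpen_ball (hL ▸ hxr) (hx ▸ hxr) fun z hz ↦ ?_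
  rcases eq_or_ne z x with rfl | hne
  · exact Or.inr ⟨hL ▸ Set.mem_singleton z, hmem⟩
  · exact Or.inl fun t ht ↦ by simpa [linearModel, hAD] using hball z hz hne t ht

end SingleZero

section AxisMap

variable {n : ℕ} {F : (Fin n → ℝ) → ℝ × (Fin n → ℝ)} {i : Fin n} {α β : ℝ} {x : Fin n → ℝ}

theorem axisMap_apply_same : axisMap i α β x i = α + β * x i := Function.update_self ..

theorem axisMap_apply_of_ne {k : Fin n} (hk : k ≠ i) : axisMap i α β x k = x k :=
  Function.update_of_ne hk ..

theorem axisMap_injective (hβ : β ≠ 0) : Function.Injective (axisMap i α β) := by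
  intro x y h
  funext k
  rcases eq_or_ne k i with rfl | hk
  · simpa [axisMap_apply_same, hβ] using congrFun h k
  · simpa [axisMap_apply_of_ne hk] using congrFun h k

theorem axisMap_eq_single_add :
    axisMap i α β = fun x ↦ Pi.single i α + toLin' (diagonal (Pi.mulSingle i β)) x := by
  funext x k
  rcases eq_or_ne k i with rfl | hk
  · simp [axisMap_apply_same, mulVec_diagonal]
  · simp [axisMap_apply_of_ne hk, mulVec_diagonal, hk]

theorem hasFDerivAt_axisMap : HasFDerivAt (axisMap i α β)
    (toLin' (diagonal (Pi.mulSingle i β))).toContinuousLinearMap x := by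
  rw [axisMap_eq_single_add]
  exact (LinearMap.toContinuousLinearMap _).hasFDerivAt.const_add _

theorem continuous_axisMap : Continuous (axisMap i α β) :=
  continuous_iff_continuousAt.mpr fun _ ↦ hasFDerivAt_axisMap.continuousAt

theorem image_axisMap_cube (hα : 0 ≤ α) (hβ : 0 < β) (hαβ : α + β ≤ 1) :
    axisMap i α β '' cube n = cube n ∩ {x | x i ∈ Set.Icc α (α + β)} := by
  ext z
  constructor
  · rintro ⟨x, hx, rfl⟩
    have h1 := mul_nonneg hβ.le (hx i).1
    have h2 := mul_le_of_le_one_right hβ.le (hx i).2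
    refine ⟨fun k ↦ ?_, ?_⟩
    · rcases eq_or_ne k i with rfl | hk
      · rw [axisMap_apply_same]
        exact ⟨by linarith, by linarith⟩
      · rw [axisMap_apply_of_ne hk]
        exact hx k
    · simpa only [Set.mem_ofPred_eq, axisMap_apply_same] using ⟨by linarith, by linarith⟩
  · rintro ⟨hz, hzi⟩
    refine ⟨Function.update z i ((z i - α) / β), fun k ↦ ?_, ?_⟩
    · rcases eq_or_ne k i with rfl | hk
      · rw [Function.update_self, Set.mem_Icc, div_le_one hβ]
        exact ⟨div_nonneg (by linarith [hzi.1]) hβ.le, by linarith [hzi.2]⟩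
      · rw [Function.update_of_ne hk]
        exact hz k
    · simp [axisMap, mul_div_cancel₀ _ hβ.ne']

theorem image_axisMap_southFiber (hα : 0 ≤ α) (hβ : 0 < β) (hαβ : α + β ≤ 1) :
    axisMap i α β '' southFiber (fun x ↦ F (axisMap i α β x)) =
      southFiber F ∩ {x | x i ∈ Set.Icc α (α + β)} := by
  have h : southFiber (fun x ↦ F (axisMap i α β x)) =
      cube n ∩ axisMap i α β ⁻¹' {z | (F z).2 = 0 ∧ (F z).1 < 0} := rfl
  rw [h, Set.image_inter_preimage, image_axisMap_cube hα hβ hαβ, Set.inter_right_comm]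
  rfl

theorem Admissible.comp_axisMap (hF : Admissible F) (hα : 0 ≤ α) (hβ : 0 < β) (hαβ : α + β ≤ 1)
    (h0 : α = 0 ∨ ∀ x ∈ southFiber F, x i ≠ α)
    (h1 : α + β = 1 ∨ ∀ x ∈ southFiber F, x i ≠ α + β) :
    Admissible fun x ↦ F (axisMap i α β x) := by
  have hcube {x} (hx : x ∈ cube n) : axisMap i α β x ∈ cube n :=
    ((image_axisMap_cube hα hβ hαβ).le ⟨x, hx, rfl⟩).1
  refine ⟨hF.continuous.comp continuous_axisMap, fun x hx ↦ hF.ne_zero _ (hcube hx),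
    fun x hx hb hz ↦ (hF.mem_southFiber_or_pos (hcube hx) hz).resolve_left fun hmem ↦ ?_⟩
  have hopen := hF.southFiber_subset_openCube hmem
  obtain ⟨k, hk⟩ := hb
  rcases eq_or_ne k i with rfl | hki
  · have hk0 := hopen k
    rw [axisMap_apply_same] at hk0
    rcases hk with hk | hk <;> rw [hk] at hk0
    · refine h0.elim (fun h ↦ ?_) fun h ↦ h _ hmem ?_
      · simp [h] at hk0
      · rw [axisMap_apply_same, hk, mul_zero, add_zero]
    · refine h1.elim (fun h ↦ ?_) fun h ↦ h _ hmem ?_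
      · simp [h] at hk0
      · rw [axisMap_apply_same, hk, mul_one]
  · exact notMem_cubeBoundary hopen ⟨k, by rwa [axisMap_apply_of_ne hki]⟩

end AxisMap

section Degree

theorem exists_lt_of_two_le_ncard {ι : Type*} {s : Set (ι → ℝ)} (hs : s.Finite)
    (h : 1 < s.ncard) : ∃ i, ∃ x ∈ s, ∃ y ∈ s, ∃ t ∈ Set.Ioo (x i) (y i), ∀ z ∈ s, z i ≠ t := by
  obtain ⟨x, hx, y, hy, hxy⟩ := (Set.one_lt_ncard hs).mp h
  obtain ⟨i, hi⟩ := Function.ne_iff.mp hxy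
  wlog hlt : x i < y i generalizing x y
  · exact this y hy x hx hxy.symm hi.symm (hi.lt_or_gt.resolve_left hlt)
  obtain ⟨t, ht, hts⟩ := (Set.Ioo_infinite hlt).exists_notMem_finite (hs.image fun z ↦ z i)
  exact ⟨i, x, hx, y, hy, t, ht, fun z hz h ↦ hts ⟨z, hz, h⟩⟩

variable {n : ℕ} {F : (Fin n → ℝ) → ℝ × (Fin n → ℝ)} {i : Fin n} {α β : ℝ} {x : Fin n → ℝ}

/-- The sign of the Jacobian determinant of `F` at a point of `southFiber F`, in the chart `ℝⁿ` of
the sphere around the opposite of the base point. -/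
noncomputable def localSign (F : (Fin n → ℝ) → ℝ × (Fin n → ℝ)) (x : Fin n → ℝ) : ℤ :=
  SignType.sign (fderiv ℝ (fun x ↦ (F x).2) x).det

/-- The degree of the map of spheres represented by `F`, as the signed count of the points of
`southFiber F`. -/
noncomputable def degree (F : (Fin n → ℝ) → ℝ × (Fin n → ℝ)) : ℤ :=
  ∑ᶠ x ∈ southFiber F, localSign F x

/-- The admissible maps for which the opposite of the base point is a regular value. -/
structure Transverse (F : (Fin n → ℝ) → ℝ × (Fin n → ℝ)) : Prop extends Admissible F where
  differentiableAt : ∀ x ∈ southFiber F, DifferentiableAt ℝ (fun x ↦ (F x).2) x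
  det_ne_zero : ∀ x ∈ southFiber F, (fderiv ℝ (fun x ↦ (F x).2) x).det ≠ 0

theorem det_fderiv_comp_axisMap (hF : DifferentiableAt ℝ (fun x ↦ (F x).2) (axisMap i α β x)) :
    (fderiv ℝ (fun x ↦ (F (axisMap i α β x)).2) x).det =
      (fderiv ℝ (fun x ↦ (F x).2) (axisMap i α β x)).det * β := by
  have h : HasFDerivAt (fun x ↦ (F (axisMap i α β x)).2) _ x :=
    hF.hasFDerivAt.comp x hasFDerivAt_axisMap
  rw [h.fderiv, ContinuousLinearMap.det, ContinuousLinearMap.toLinearMap_comp, LinearMap.det_comp]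
  simp [ContinuousLinearMap.det]

theorem localSign_comp_axisMap (hβ : 0 < β)
    (hF : DifferentiableAt ℝ (fun x ↦ (F x).2) (axisMap i α β x)) :
    localSign (fun x ↦ F (axisMap i α β x)) x = localSign F (axisMap i α β x) := by
  simp only [localSign]
  rw [det_fderiv_comp_axisMap hF, sign_mul, sign_pos hβ, mul_one]

namespace Transverse

theorem finite_southFiber (hF : Transverse F) : (southFiber F).Finite := by
  by_contra hinf
  obtain ⟨x, hx, hacc⟩ := Set.Infinite.exists_accPt_of_subset_isCompact hinf
    hF.isCompact_southFiber subset_rfl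
  have hanti := ((fderiv ℝ (fun x ↦ (F x).2) x).toContinuousLinearEquivOfDetNeZero
    (hF.det_ne_zero x hx)).antilipschitz
  obtain ⟨y, hy, hy0⟩ := ((accPt_iff_frequently_nhdsNE.mp hacc).and_eventually
    ((hF.differentiableAt x hx).hasFDerivAt.eventually_ne (c := 0) ⟨_, hanti⟩)).exists
  exact hy0 hy.2.1

theorem comp_axisMap (hF : Transverse F) (hα : 0 ≤ α) (hβ : 0 < β) (hαβ : α + β ≤ 1)
    (h0 : α = 0 ∨ ∀ x ∈ southFiber F, x i ≠ α)
    (h1 : α + β = 1 ∨ ∀ x ∈ southFiber F, x i ≠ α + β) :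
    Transverse fun x ↦ F (axisMap i α β x) := by
  have himage := image_axisMap_southFiber (F := F) (i := i) hα hβ hαβ
  have hmem {x} (hx : x ∈ southFiber fun x ↦ F (axisMap i α β x)) :
      axisMap i α β x ∈ southFiber F := (himage.le ⟨x, hx, rfl⟩).1
  refine ⟨hF.toAdmissible.comp_axisMap hα hβ hαβ h0 h1, fun x hx ↦ ?_, fun x hx ↦ ?_⟩
  · exact (hF.differentiableAt _ (hmem hx)).comp x hasFDerivAt_axisMap.differentiableAt
  · rw [det_fderiv_comp_axisMap (hF.differentiableAt _ (hmem hx))]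
    exact mul_ne_zero (hF.det_ne_zero _ (hmem hx)) hβ.ne'

theorem degree_comp_axisMap (hF : Transverse F) (hα : 0 ≤ α) (hβ : 0 < β) (hαβ : α + β ≤ 1) :
    degree (fun x ↦ F (axisMap i α β x)) =
      ∑ᶠ x ∈ southFiber F ∩ {x | x i ∈ Set.Icc α (α + β)}, localSign F x := by
  have himage := image_axisMap_southFiber (F := F) (i := i) hα hβ hαβ
  rw [← himage, finsum_mem_image (axisMap_injective hβ.ne').injOn, degree]
  exact finsum_mem_congr rfl fun x hx ↦ localSign_comp_axisMap hβ
    (hF.differentiableAt _ (himage.le ⟨x, hx, rfl⟩).1)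

theorem ncard_southFiber_comp_axisMap_lt (hF : Transverse F) (hα : 0 ≤ α) (hβ : 0 < β)
    (hαβ : α + β ≤ 1) (hx : x ∈ southFiber F) (hxi : x i ∉ Set.Icc α (α + β)) :
    (southFiber fun x ↦ F (axisMap i α β x)).ncard < (southFiber F).ncard := by
  rw [← Set.ncard_image_of_injective _ (axisMap_injective (i := i) (α := α) hβ.ne'),
    image_axisMap_southFiber hα hβ hαβ]
  exact Set.ncard_lt_ncard (Set.inter_ssubset_left_iff.mpr fun h ↦ hxi (h hx))
    hF.finite_southFiber

theorem degree_comp_axisMap_add (hF : Transverse F) {t : ℝ} (ht0 : 0 < t) (ht1 : t < 1)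
    (ht : ∀ x ∈ southFiber F, x i ≠ t) :
    degree (fun x ↦ F (axisMap i t (1 - t) x)) + degree (fun x ↦ F (axisMap i 0 t x)) =
      degree F := by
  rw [hF.degree_comp_axisMap ht0.le (by linarith) (by linarith),
    hF.degree_comp_axisMap le_rfl ht0 (by linarith), add_comm, zero_add, add_sub_cancel,
    ← finsum_mem_union, ← Set.inter_union_distrib_left, degree]
  · rw [Set.inter_eq_self_of_subset_left]
    exact fun x hx ↦
      (le_total (x i) t).imp (fun h ↦ ⟨(hx.1 i).1, h⟩) fun h ↦ ⟨h, (hx.1 i).2⟩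
  · exact Set.disjoint_left.mpr fun x hx hx' ↦ ht x hx.1 (le_antisymm hx.2.2 hx'.2.1)
  · exact hF.finite_southFiber.inter_of_left _
  · exact hF.finite_southFiber.inter_of_left _

variable [Nonempty (Fin n)]

theorem hasClass (hF : Transverse F) : HasClass F (fundamentalClass n ^ degree F) := by
  induction hk : (southFiber F).ncard using Nat.strong_induction_on generalizing F with
  | _ k ih =>
  obtain hlt | rfl | hlt := lt_trichotomy k 1
  · rw [Nat.lt_one_iff.mp hlt, Set.ncard_eq_zero hF.finite_southFiber] at hk
    rw [degree, hk, finsum_mem_empty, zpow_zero]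
    exact hasClass_one hF.continuous fun x hx h0 ↦
      (hF.mem_southFiber_or_pos hx h0).resolve_left (hk ▸ Set.notMem_empty x)
  · obtain ⟨x, hx⟩ := Set.ncard_eq_one.mp hk
    have hmem : x ∈ southFiber F := hx ▸ Set.mem_singleton x
    rw [degree, hx, finsum_mem_singleton]
    exact HasClass.of_southFiber_eq_singleton hF.toAdmissible hx
      (hF.differentiableAt x hmem).hasFDerivAt (hF.det_ne_zero x hmem)
  · obtain ⟨i, x, hx, y, hy, t, ht, hne⟩ :=
      exists_lt_of_two_le_ncard hF.finite_southFiber (hk ▸ hlt)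
    have ht0 : 0 < t := (hx.1 i).1.trans_lt ht.1
    have ht1 : t < 1 := ht.2.trans_le (hy.1 i).2
    have hl := hF.comp_axisMap (i := i) (α := 0) (β := t) le_rfl ht0 (by linarith) (Or.inl rfl)
      (Or.inr (by simpa using hne))
    have hr := hF.comp_axisMap (i := i) (α := t) (β := 1 - t) ht0.le (by linarith) (by linarith)
      (Or.inr hne) (Or.inl (by ring))
    rw [← hF.degree_comp_axisMap_add ht0 ht1 hne, _root_.zpow_add]
    refine HasClass.split hF.toAdmissible i ⟨ht0.le, ht1.le⟩ (ih _ ?_ hl rfl) (ih _ ?_ hr rfl)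
    · exact hk ▸ hF.ncard_southFiber_comp_axisMap_lt le_rfl ht0 (by linarith) hy
        fun h ↦ (h.2.trans_eq (zero_add t)).not_gt ht.2
    · exact hk ▸ hF.ncard_southFiber_comp_axisMap_lt ht0.le (by linarith) (by linarith) hx
        fun h ↦ h.1.not_gt ht.1

end Transverse

end Degree

section Regular

theorem exists_forall_det_fderiv_ne_zero {E : Type*} [NormedAddCommGroup E] [NormedSpace ℝ E]
    [FiniteDimensional ℝ E] {g : E → E} {s : Set E} (hg : ∀ x ∈ s, DifferentiableAt ℝ g x) :
    ∃ v, ∀ x ∈ s, g x = v → (fderiv ℝ g x).det ≠ 0 := by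
  borelize E
  have hnull := MeasureTheory.addHaar_image_eq_zero_of_det_fderivWithin_eq_zero
    (MeasureTheory.Measure.addHaar (G := E)) (s := s ∩ {x | (fderiv ℝ g x).det = 0})
    (fun x hx ↦ (hg x hx.1).hasFDerivAt.hasFDerivWithinAt) fun x hx ↦ hx.2
  obtain ⟨v, hv⟩ : ∃ v, v ∉ g '' (s ∩ {x | (fderiv ℝ g x).det = 0}) := by
    by_contra! h
    rw [Set.eq_univ_of_forall h] at hnull
    exact MeasureTheory.Measure.measure_univ_ne_zero.mpr (NeZero.ne _) hnull
  exact ⟨v, fun x hx hgx h0 ↦ hv ⟨x, ⟨hx, h0⟩, hgx⟩⟩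

theorem line_ne_zero_of_dist_lt {E : Type*} [NormedAddCommGroup E] [NormedSpace ℝ E] {x y : E}
    (h : dist y x < ‖x‖) {t : ℝ} (ht : t ∈ Set.Icc (0 : ℝ) 1) : (1 - t) • x + t • y ≠ 0 := by
  intro h0
  have hx : x = -(t • (y - x)) := by
    rw [eq_neg_iff_add_eq_zero, ← h0]
    module
  refine h.not_ge ?_
  calc ‖x‖ = t * ‖y - x‖ := by
        nth_rewrite 1 [hx]
        rw [norm_neg, norm_smul, Real.norm_of_nonneg ht.1]
    _ ≤ dist y x := (dist_eq_norm y x).symm ▸ mul_le_of_le_one_left (norm_nonneg _) ht.2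

variable {n : ℕ} {F G : (Fin n → ℝ) → ℝ × (Fin n → ℝ)}

/-- The shear of `ℝ × ℝⁿ` that carries the ray through `(-1, v)` to the negative half-axis. -/
def shear (v : Fin n → ℝ) (y : ℝ × (Fin n → ℝ)) : ℝ × (Fin n → ℝ) := (y.1, y.2 + y.1 • v)

theorem shear_ne_zero {v : Fin n → ℝ} {y : ℝ × (Fin n → ℝ)} (hy : y ≠ 0) : shear v y ≠ 0 := by
  intro h
  have h1 : y.1 = 0 := congrArg Prod.fst h
  exact hy (Prod.ext h1 (by simpa [shear, h1] using congrArg Prod.snd h))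

theorem hasClass_shear (hF : Continuous F) (hne : ∀ x ∈ cube n, F x ≠ 0)
    (hpos : ∀ x ∈ cubeBoundary n, 0 < (F x).1) (v : Fin n → ℝ) {a} (ha : HasClass F a) :
    HasClass (fun x ↦ shear v (F x)) a := by
  have hcont : Continuous fun z : ℝ × (Fin n → ℝ) ↦ shear (z.1 • v) (F z.2) := by
    unfold shear
    fun_prop
  simpa using HasClass.homotopy (G := fun t x ↦ shear (t • v) (F x)) hcont
    (fun t _ ↦ ⟨hcont.comp (Continuous.prodMk_right t), fun x hx ↦ shear_ne_zero (hne x hx),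
      fun x _ hb _ ↦ hpos x hb⟩) (a := a) (by simpa [shear] using ha)

theorem exists_forall_det_fderiv_shear_ne_zero (hG : Differentiable ℝ G) :
    ∃ v, ∀ x, (G x).1 < 0 → (shear v (G x)).2 = 0 →
      (fderiv ℝ (fun x ↦ (shear v (G x)).2) x).det ≠ 0 := by
  have h1 : Differentiable ℝ fun x ↦ (G x).1 := hG.fst
  have h2 : Differentiable ℝ fun x ↦ (G x).2 := hG.snd
  set g : (Fin n → ℝ) → Fin n → ℝ := fun x ↦ (G x).1⁻¹ • (G x).2 with hgdef
  have hg (x) (hx : (G x).1 ≠ 0) : DifferentiableAt ℝ g x := ((h1 x).inv hx).smul (h2 x)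
  obtain ⟨v, hv⟩ := exists_forall_det_fderiv_ne_zero hg
  refine ⟨-v, fun x hx h0 ↦ ?_⟩
  have hshear {y} (hy : (G y).1 ≠ 0) : (shear (-v) (G y)).2 = (G y).1 • (g y - v) := by
    simp [shear, hgdef, smul_inv_smul₀ hy, sub_eq_add_neg]
  have hgx : g x = v := by
    rw [hshear hx.ne] at h0
    exact sub_eq_zero.mp ((smul_eq_zero_iff_right hx.ne).mp h0)
  have hev : (fun y ↦ (shear (-v) (G y)).2) =ᶠ[𝓝 x] fun y ↦ (G y).1 • (g y - v) := by
    filter_upwards [h1.continuous.continuousAt.eventually_ne hx.ne] with y hy using hshear hy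
  have hderiv : fderiv ℝ (fun y ↦ (shear (-v) (G y)).2) x = (G x).1 • fderiv ℝ g x := by
    rw [hev.fderiv_eq, fderiv_fun_smul (h1 x) ((hg x hx.ne).sub_const v), fderiv_sub_const, hgx]
    simp
  rw [hderiv, ContinuousLinearMap.det, ContinuousLinearMap.toLinearMap_smul, LinearMap.det_smul]
  exact mul_ne_zero (pow_ne_zero _ hx.ne) (hv x hx.ne hgx)

theorem exists_differentiable_hasClass (f : Ω^ (Fin n) (UnitSphere n) (spherePole n)) :
    ∃ G : (Fin n → ℝ) → ℝ × (Fin n → ℝ), Differentiable ℝ G ∧ (∀ x, G x ≠ 0) ∧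
      (∀ x ∈ cubeBoundary n, 0 < (G x).1) ∧ HasClass G (loopClass f) := by
  set F : (Fin n → ℝ) → ℝ × (Fin n → ℝ) := fun x ↦ sphereCoords (f (cubeProj x)) with hFdef
  have hF : Continuous F := continuous_sphereCoords.comp ((map_continuous f).comp (by fun_prop))
  have hFb {x} (hx : x ∈ cubeBoundary n) : F x = (1, 0) := by
    simp only [hFdef]
    rw [GenLoop.boundary f _ (cubeProj_mem_boundary hx), sphereCoords_spherePole]
  obtain ⟨G, hGs, hG, -⟩ := hF.exists_contDiff_approx 1 (ε := fun x ↦ ‖F x‖) (by fun_prop)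
    fun x ↦ norm_pos_iff.mpr (sphereCoords_ne_zero _)
  have hGd : Differentiable ℝ G := hGs.differentiable one_ne_zero
  have hGb {x} (hx : x ∈ cubeBoundary n) : 0 < (G x).1 := by
    have h : dist (G x).1 1 < 1 := by
      have := hG x
      rw [hFb hx, Prod.norm_mk, norm_one, norm_zero, max_eq_left zero_le_one] at this
      exact (le_max_left _ _).trans_lt this
    linarith [(abs_lt.mp h).1]
  have hline (x) {t : ℝ} (ht : t ∈ Set.Icc (0 : ℝ) 1) := line_ne_zero_of_dist_lt (hG x) ht
  refine ⟨G, hGd, fun x ↦ by simpa using hline x (t := 1) (by simp), fun x ↦ hGb, ?_⟩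
  have hGc := hGd.continuous
  have hadm (t : ℝ) (ht : t ∈ Set.Icc (0 : ℝ) 1) :
      Admissible fun x ↦ (1 - t) • F x + t • G x := by
    refine ⟨by fun_prop, fun x _ ↦ hline x ht, fun x _ hb _ ↦ ?_⟩
    simpa [hFb hb] using one_sub_mul_add_mul_pos ht one_pos (hGb hb)
  exact (hasClass_sphereCoords_comp f).of_admissible_line hF hGc hadm

theorem exists_transverse_hasClass (f : Ω^ (Fin n) (UnitSphere n) (spherePole n)) :
    ∃ F : (Fin n → ℝ) → ℝ × (Fin n → ℝ), Transverse F ∧ HasClass F (loopClass f) := by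
  obtain ⟨G, hG, hne, hpos, hclass⟩ := exists_differentiable_hasClass f
  obtain ⟨v, hv⟩ := exists_forall_det_fderiv_shear_ne_zero hG
  have hd : Differentiable ℝ fun x ↦ shear v (G x) := by
    unfold shear
    fun_prop
  exact ⟨fun x ↦ shear v (G x),
    ⟨⟨hd.continuous, fun x _ ↦ shear_ne_zero (hne x), fun x _ hb _ ↦ hpos x hb⟩,
      fun x _ ↦ (hd x).snd, fun x hx ↦ hv x hx.2.2 hx.2.1⟩,
    hasClass_shear hG.continuous (fun x _ ↦ hne x) hpos v hclass⟩

theorem zpowers_fundamentalClass [Nonempty (Fin n)] :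
    Subgroup.zpowers (fundamentalClass n) = ⊤ := by
  refine eq_top_iff.mpr fun a _ ↦ ?_
  obtain ⟨f, rfl⟩ := loopClass_surjective a
  obtain ⟨F, hF, hclass⟩ := exists_transverse_hasClass f
  exact ⟨degree F, hF.hasClass.unique hclass⟩

end Regular

section ReflectPole

theorem hasFDerivAt_smul_of_eq_zero {E E' : Type*} [NormedAddCommGroup E] [NormedSpace ℝ E]
    [NormedAddCommGroup E'] [NormedSpace ℝ E'] {u : E → ℝ} {v : E → E'} {L : E →L[ℝ] E'} {x : E}
    (hu : DifferentiableAt ℝ u x) (hv : HasFDerivAt v L x) (h : v x = 0) :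
    HasFDerivAt (fun x ↦ u x • v x) (u x • L) x := by
  refine (hu.hasFDerivAt.smul hv).congr_fderiv ?_
  simp only [h, ContinuousLinearMap.smulRight_zero, add_zero]

variable {n : ℕ} {F V : (Fin n → ℝ) → ℝ × (Fin n → ℝ)} {x : Fin n → ℝ}

theorem sphereCoords_toSphere {y : ℝ × (Fin n → ℝ)} (hy : y ≠ 0) :
    sphereCoords (toSphere y) = ‖euclideanCons n y‖⁻¹ • y := by
  rw [sphereCoords, coe_toSphere hy, map_smul, ContinuousLinearEquiv.symm_apply_apply]

theorem Admissible.hasClass_loopClass (hF : Admissible F)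
    {f : Ω^ (Fin n) (UnitSphere n) (spherePole n)} (hf : ∀ y, f y = toSphere (F (cubeCoe y))) :
    HasClass F (loopClass f) := by
  have hcont : Continuous fun x ↦ sphereCoords (f (cubeProj x)) :=
    continuous_sphereCoords.comp ((map_continuous f).comp continuous_cubeProj)
  have hline (t : ℝ) (ht : t ∈ Set.Icc (0 : ℝ) 1) (x : Fin n → ℝ) (hx : x ∈ cube n) :
      ∃ c : ℝ, 0 < c ∧ (1 - t) • sphereCoords (f (cubeProj x)) + t • F x = c • F x := by
    have hn : 0 < ‖euclideanCons n (F x)‖⁻¹ := by simpa using hF.ne_zero x hx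
    refine ⟨(1 - t) * ‖euclideanCons n (F x)‖⁻¹ + t * 1,
      one_sub_mul_add_mul_pos ht hn one_pos, ?_⟩
    rw [hf, cubeCoe_cubeProj hx, sphereCoords_toSphere (hF.ne_zero x hx)]
    module
  have hadm (t : ℝ) (ht : t ∈ Set.Icc (0 : ℝ) 1) :
      Admissible fun x ↦ (1 - t) • sphereCoords (f (cubeProj x)) + t • F x := by
    have hFc := hF.continuous
    refine ⟨by fun_prop, fun x hx ↦ ?_, fun x hx hb h0 ↦ ?_⟩ <;>
      obtain ⟨c, hc, h⟩ := hline t ht x hx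
    · exact h ▸ smul_ne_zero hc.ne' (hF.ne_zero x hx)
    · rw [h] at h0 ⊢
      exact mul_pos hc (hF.fst_pos x hx hb ((smul_eq_zero_iff_right hc.ne').mp h0))
  exact (hasClass_sphereCoords_comp f).of_admissible_line hcont hF.continuous hadm

/-- The image of the base point under the reflection in the hyperplane orthogonal to `y`, multiplied
by `‖y‖²` in order to be polynomial in `y`. -/
def reflectPole (y : ℝ × (Fin n → ℝ)) : ℝ × (Fin n → ℝ) :=
  (y.2 ⬝ᵥ y.2 - y.1 ^ 2, (-2 * y.1) • y.2)

theorem reflectPole_ne_zero {y : ℝ × (Fin n → ℝ)} (hy : y ≠ 0) : reflectPole y ≠ 0 := by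
  intro h
  have h1 : y.2 ⬝ᵥ y.2 = y.1 ^ 2 := sub_eq_zero.mp (congrArg Prod.fst h)
  rcases smul_eq_zero.mp (congrArg Prod.snd h : (-2 * y.1) • y.2 = 0) with h0 | h2
  · have h0 : y.1 = 0 := by linarith
    exact hy (Prod.ext h0 (dotProduct_self_eq_zero.mp (by simpa [h0] using h1)))
  · exact hy (Prod.ext (pow_eq_zero_iff two_ne_zero |>.mp (by simpa [h2] using h1.symm)) h2)

theorem toSphere_reflectPole {y : ℝ × (Fin n → ℝ)} (hy : y ≠ 0) {p : UnitSphere n}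
    (hp : ((p : EuclideanSpace ℝ (Fin (n + 1))) : Fin (n + 1) → ℝ) =
      householder (Fin.cons y.1 y.2) *ᵥ Pi.single 0 1) :
    toSphere (reflectPole y) = p := by
  set v : Fin (n + 1) → ℝ := Fin.cons y.1 y.2
  have hdot : v ⬝ᵥ v = y.1 ^ 2 + y.2 ⬝ᵥ y.2 := by
    simp [v, dotProduct, Fin.sum_univ_succ, sq]
  have hv : v ≠ 0 := fun h ↦ hy (Prod.ext (congrFun h 0) (funext fun i ↦ congrFun h i.succ))
  have hpos : 0 < v ⬝ᵥ v := by simpa using dotProduct_star_self_pos_iff.mpr hv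
  rw [householder_mulVec, dotProduct_single_one] at hp
  set c := 2 * v 0 / (v ⬝ᵥ v)
  have hc : (v ⬝ᵥ v) * c = 2 * y.1 := mul_div_cancel₀ _ hpos.ne'
  have hp1 : (sphereCoords p).1 = 1 - c * y.1 := (congrFun hp 0).trans (by simp [v])
  have hp2 (i : Fin n) : (sphereCoords p).2 i = -(c * y.2 i) :=
    (congrFun hp i.succ).trans (by simp [v])
  have hsmul : reflectPole y = (v ⬝ᵥ v) • sphereCoords p := by
    refine Prod.ext ?_ (funext fun i ↦ ?_)
    · rw [reflectPole, Prod.smul_fst, smul_eq_mul, hp1]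
      linear_combination y.1 * hc - hdot
    · change -2 * y.1 * y.2 i = (v ⬝ᵥ v) * (sphereCoords p).2 i
      rw [hp2]
      linear_combination y.2 i * hc
  rw [hsmul, toSphere_smul hpos (sphereCoords_ne_zero p), toSphere_sphereCoords]

/-- A vector field along the cube whose values are the normals of reflections that fix the base
point over the boundary of the cube. -/
structure ReflectionField (V : (Fin n → ℝ) → ℝ × (Fin n → ℝ)) : Prop where
  differentiable : Differentiable ℝ V
  ne_zero : ∀ x ∈ cube n, V x ≠ 0
  fst_eq_zero : ∀ x ∈ cubeBoundary n, (V x).1 = 0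

namespace ReflectionField

theorem admissible (hV : ReflectionField V) : Admissible fun x ↦ reflectPole (V x) := by
  have hcont := hV.differentiable.continuous
  refine ⟨?_, fun x hx ↦ reflectPole_ne_zero (hV.ne_zero x hx), fun x hx hb _ ↦ ?_⟩
  · unfold reflectPole
    fun_prop
  · have h1 := hV.fst_eq_zero x hb
    have h2 : (V x).2 ≠ 0 := fun h2 ↦ hV.ne_zero x hx (Prod.ext h1 h2)
    simpa [reflectPole, h1] using dotProduct_star_self_pos_iff.mpr h2

theorem mem_southFiber_iff (hV : ReflectionField V) :
    x ∈ southFiber (fun x ↦ reflectPole (V x)) ↔ x ∈ cube n ∧ (V x).2 = 0 := by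
  refine and_congr_right fun hx ↦ ⟨fun ⟨h2, h1⟩ ↦ ?_, fun h ↦ ?_⟩
  · refine (smul_eq_zero.mp h2).resolve_left fun h0 ↦ h1.not_ge ?_
    have : (V x).1 = 0 := by linarith
    simpa [reflectPole, this] using dotProduct_star_self_nonneg (V x).2
  · have h1 : (V x).1 ≠ 0 := fun h1 ↦ hV.ne_zero x hx (Prod.ext h1 h)
    simpa [reflectPole, h] using sq_pos_of_ne_zero h1

theorem hasFDerivAt (hV : ReflectionField V) (hx : (V x).2 = 0) :
    HasFDerivAt (fun x ↦ (reflectPole (V x)).2)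
      ((-2 * (V x).1) • fderiv ℝ (fun x ↦ (V x).2) x) x :=
  hasFDerivAt_smul_of_eq_zero ((hV.differentiable x).fst.const_mul (-2))
    (hV.differentiable x).snd.hasFDerivAt hx

theorem det_fderiv (hV : ReflectionField V) (hx : (V x).2 = 0) :
    (fderiv ℝ (fun x ↦ (reflectPole (V x)).2) x).det =
      (-2 * (V x).1) ^ n * (fderiv ℝ (fun x ↦ (V x).2) x).det := by
  rw [(hV.hasFDerivAt hx).fderiv]
  simp [ContinuousLinearMap.det, LinearMap.det_smul]

theorem transverse (hV : ReflectionField V)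
    (h : ∀ x ∈ cube n, (V x).2 = 0 → (fderiv ℝ (fun x ↦ (V x).2) x).det ≠ 0) :
    Transverse fun x ↦ reflectPole (V x) := by
  refine ⟨hV.admissible, fun x hx ↦ ?_, fun x hx ↦ ?_⟩ <;>
    obtain ⟨hx, h2⟩ := hV.mem_southFiber_iff.mp hx
  · exact (hV.hasFDerivAt h2).differentiableAt
  · have h1 : (V x).1 ≠ 0 := fun h1 ↦ hV.ne_zero x hx (Prod.ext h1 h2)
    rw [hV.det_fderiv h2]
    exact mul_ne_zero (pow_ne_zero n (mul_ne_zero (by norm_num) h1)) (h x hx h2)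

end ReflectionField

theorem Transverse.zpowers_eq_top [Nonempty (Fin n)]
    {a : HomotopyGroup (Fin n) (UnitSphere n) (spherePole n)} (hF : Transverse F)
    (hx : southFiber F = {x}) (ha : HasClass F a) : Subgroup.zpowers a = ⊤ := by
  have hdeg : degree F = localSign F x := by rw [degree, hx, finsum_mem_singleton]
  rw [ha.unique hF.hasClass, hdeg, localSign]
  rcases lt_or_gt_of_ne (hF.det_ne_zero x (hx ▸ Set.mem_singleton x)) with h | h
  · simpa [sign_neg h] using zpowers_fundamentalClass
  · simpa [sign_pos h] using zpowers_fundamentalClass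

end ReflectPole

section CharacteristicField

variable {n : ℕ} {i₀ : Fin n} {x : Fin n → ℝ}

/-- The affine coordinates on the cube with origin at its centre and values in `[-1, 1]`. -/
def centered (x : Fin n → ℝ) : Fin n → ℝ := fun i ↦ 2 * x i - 1

/-- The square of the distance to the centre of the cube, in the coordinates `centered`. -/
def radiusSq (x : Fin n → ℝ) : ℝ := ∑ i, centered x i ^ 2

/-- A function that is positive inside the cube and vanishes on its boundary. -/
def bump (x : Fin n → ℝ) : ℝ := ∏ i, (1 - centered x i ^ 2)

theorem centered_eq_iff {v : Fin n → ℝ} : centered x = v ↔ x = fun i ↦ (1 + v i) / 2 := by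
  simp only [funext_iff, centered]
  exact forall_congr' fun i ↦ ⟨fun h ↦ by linarith, fun h ↦ by linarith⟩

theorem hasFDerivAt_centered (i : Fin n) (x : Fin n → ℝ) :
    HasFDerivAt (fun x ↦ centered x i)
      ((2 : ℝ) • (ContinuousLinearMap.proj i : (Fin n → ℝ) →L[ℝ] ℝ)) x :=
  ((hasFDerivAt_apply i x).const_mul 2).sub_const 1

theorem hasFDerivAt_radiusSq {t : ℝ} (hx : centered x = Pi.single i₀ t) :
    HasFDerivAt radiusSq ((4 * t) • (ContinuousLinearMap.proj i₀ : (Fin n → ℝ) →L[ℝ] ℝ)) x := by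
  refine (HasFDerivAt.fun_sum fun i (_ : i ∈ Finset.univ) ↦
    (hasFDerivAt_centered i x).pow 2).congr_fderiv ?_
  rw [Finset.sum_eq_single_of_mem i₀ (Finset.mem_univ _) fun i _ hi ↦ by simp [hx, hi], hx,
    Pi.single_eq_same, smul_smul]
  congr 1
  norm_num
  ring

@[fun_prop]
theorem differentiable_centered : Differentiable ℝ (centered (n := n)) :=
  differentiable_pi.mpr fun i x ↦ (hasFDerivAt_centered i x).differentiableAt

@[fun_prop]
theorem differentiable_radiusSq : Differentiable ℝ (radiusSq (n := n)) := by
  unfold radiusSq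
  fun_prop

@[fun_prop]
theorem differentiable_bump : Differentiable ℝ (bump (n := n)) := by
  unfold bump
  fun_prop

theorem bump_pos (hx : x ∈ openCube n) : 0 < bump x :=
  Finset.prod_pos fun i _ ↦ by
    have h : 1 - centered x i ^ 2 = 4 * (x i * (1 - x i)) := by
      simp only [centered]
      ring
    rw [h]
    exact mul_pos four_pos (mul_pos (hx i).1 (sub_pos.mpr (hx i).2))

theorem centered_sq_of_mem_cubeBoundary (hx : x ∈ cubeBoundary n) : ∃ i, centered x i ^ 2 = 1 := by
  obtain ⟨i, h | h⟩ := hx <;> exact ⟨i, by norm_num [centered, h]⟩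

theorem bump_eq_zero (hx : x ∈ cubeBoundary n) : bump x = 0 := by
  obtain ⟨i, hi⟩ := centered_sq_of_mem_cubeBoundary hx
  exact Finset.prod_eq_zero (Finset.mem_univ i) (sub_eq_zero.mpr hi.symm)

theorem one_le_radiusSq (hx : x ∈ cubeBoundary n) : 1 ≤ radiusSq x := by
  obtain ⟨i, hi⟩ := centered_sq_of_mem_cubeBoundary hx
  exact hi.symm.le.trans (Finset.single_le_sum (f := fun i ↦ centered x i ^ 2)
    (fun i _ ↦ sq_nonneg _) (Finset.mem_univ i))

theorem radiusSq_eq_sq {t : ℝ} (hx : centered x = Pi.single i₀ t) : radiusSq x = t ^ 2 := by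
  rw [radiusSq, Finset.sum_eq_single_of_mem i₀ (Finset.mem_univ _) fun i _ hi ↦ by simp [hx, hi],
    hx, Pi.single_eq_same]

/-- A reflection field that points in the direction of the `i₀`-th axis on the boundary of the
cube. Composing its reflections with the reflection in that direction gives a loop in `SO(n + 1)`,
which turns out to be the image of a generator of `π_{n+1}(S^{n+1})` under the connecting
homomorphism. -/
noncomputable def characteristicField (i₀ : Fin n) (x : Fin n → ℝ) : ℝ × (Fin n → ℝ) :=
  (bump x * centered x i₀, Function.update (bump x • centered x) i₀ (radiusSq x - 1 / 2))

theorem characteristicField_snd_self : (characteristicField i₀ x).2 i₀ = radiusSq x - 1 / 2 :=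
  Function.update_self ..

theorem characteristicField_snd_of_ne {i : Fin n} (hi : i ≠ i₀) :
    (characteristicField i₀ x).2 i = bump x * centered x i :=
  Function.update_of_ne hi ..

theorem characteristicField_of_mem_cubeBoundary (hx : x ∈ cubeBoundary n) :
    characteristicField i₀ x = (0, (radiusSq x - 1 / 2) • Pi.single i₀ 1) := by
  refine Prod.ext (by simp [characteristicField, bump_eq_zero hx]) (funext fun i ↦ ?_)
  rcases eq_or_ne i i₀ with rfl | hi
  · simp [characteristicField_snd_self]
  · simp [characteristicField_snd_of_ne hi, bump_eq_zero hx, hi]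

theorem bump_pos_of_characteristicField_snd_eq_zero (hx : x ∈ cube n)
    (h : (characteristicField i₀ x).2 = 0) : 0 < bump x := by
  refine bump_pos (mem_openCube hx fun hb ↦ ?_)
  have h0 : radiusSq x - 1 / 2 = 0 := characteristicField_snd_self.symm.trans (congrFun h i₀)
  linarith [one_le_radiusSq hb]

theorem characteristicField_snd_eq_zero_iff (hx : x ∈ cube n) :
    (characteristicField i₀ x).2 = 0 ↔ ∃ t, t ^ 2 = 1 / 2 ∧ centered x = Pi.single i₀ t := by
  refine ⟨fun h ↦ ⟨centered x i₀, ?_⟩, fun ⟨t, ht, h⟩ ↦ ?_⟩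
  · have hb := bump_pos_of_characteristicField_snd_eq_zero hx h
    have hc : centered x = Pi.single i₀ (centered x i₀) := by
      funext i
      rcases eq_or_ne i i₀ with rfl | hi
      · rw [Pi.single_eq_same]
      · rw [Pi.single_eq_of_ne hi]
        have := congrFun h i
        rw [characteristicField_snd_of_ne hi] at this
        exact (mul_eq_zero.mp this).resolve_left hb.ne'
    refine ⟨?_, hc⟩
    rw [← radiusSq_eq_sq hc]
    exact sub_eq_zero.mp (characteristicField_snd_self.symm.trans (congrFun h i₀))
  · funext i
    rcases eq_or_ne i i₀ with rfl | hi
    · rw [characteristicField_snd_self, radiusSq_eq_sq h, ht, sub_self, Pi.zero_apply]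
    · rw [characteristicField_snd_of_ne hi, h, Pi.single_eq_of_ne hi, mul_zero, Pi.zero_apply]

theorem reflectionField_characteristicField (i₀ : Fin n) :
    ReflectionField (characteristicField i₀) := by
  refine ⟨?_, fun x hx h ↦ ?_, fun x hb ↦ ?_⟩
  · refine Differentiable.prodMk (by fun_prop) (differentiable_pi.mpr fun i ↦ ?_)
    rcases eq_or_ne i i₀ with rfl | hi
    · simp only [Function.update_self]
      fun_prop
    · simp only [Function.update_of_ne hi, Pi.smul_apply]
      fun_prop
  · have h2 : (characteristicField i₀ x).2 = 0 := congrArg Prod.snd h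
    obtain ⟨t, ht, hc⟩ := (characteristicField_snd_eq_zero_iff hx).mp h2
    have hb := bump_pos_of_characteristicField_snd_eq_zero hx h2
    have h1 : bump x * t = 0 := by
      simpa [characteristicField, hc] using congrArg Prod.fst h
    have ht0 : t = 0 := (mul_eq_zero.mp h1).resolve_left hb.ne'
    norm_num [ht0] at ht
  · rw [characteristicField_of_mem_cubeBoundary hb]

theorem hasFDerivAt_characteristicField_snd {t : ℝ} (hx : centered x = Pi.single i₀ t) :
    HasFDerivAt (fun x ↦ (characteristicField i₀ x).2)
      (toLin' (diagonal (Function.update (fun _ ↦ 2 * bump x) i₀ (4 * t)))).toContinuousLinearMap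
      x := by
  refine hasFDerivAt_pi'.mpr fun i ↦ ?_
  rcases eq_or_ne i i₀ with rfl | hi
  · simp only [characteristicField_snd_self]
    refine ((hasFDerivAt_radiusSq hx).sub_const _).congr_fderiv ?_
    ext v
    simp [mulVec_diagonal]
  · simp only [characteristicField_snd_of_ne hi]
    refine (hasFDerivAt_smul_of_eq_zero (differentiable_bump x) (hasFDerivAt_centered i x)
      (by rw [hx, Pi.single_eq_of_ne hi])).congr_fderiv ?_
    ext v
    simp [mulVec_diagonal, hi]
    ring

theorem det_fderiv_characteristicField_snd {t : ℝ} (hx : centered x = Pi.single i₀ t) :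
    (fderiv ℝ (fun x ↦ (characteristicField i₀ x).2) x).det =
      4 * t * (2 * bump x) ^ (n - 1) := by
  rw [(hasFDerivAt_characteristicField_snd hx).fderiv, ContinuousLinearMap.det]
  simp [Finset.prod_update_of_mem, Finset.card_sdiff]

theorem transverse_characteristicField (i₀ : Fin n) :
    Transverse fun x ↦ reflectPole (characteristicField i₀ x) := by
  refine (reflectionField_characteristicField i₀).transverse fun x hx h ↦ ?_
  have hb := bump_pos_of_characteristicField_snd_eq_zero hx h
  obtain ⟨t, ht, hc⟩ := (characteristicField_snd_eq_zero_iff hx).mp h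
  have ht0 : t ≠ 0 := fun ht0 ↦ by norm_num [ht0] at ht
  rw [det_fderiv_characteristicField_snd hc]
  positivity

theorem localSign_characteristicField (hn : Odd n) (hx : x ∈ cube n)
    (h : (characteristicField i₀ x).2 = 0) :
    localSign (fun x ↦ reflectPole (characteristicField i₀ x)) x = -1 := by
  have hb := bump_pos_of_characteristicField_snd_eq_zero hx h
  obtain ⟨t, ht, hc⟩ := (characteristicField_snd_eq_zero_iff hx).mp h
  have ht0 : t ≠ 0 := fun ht0 ↦ by norm_num [ht0] at ht
  have h1 : (characteristicField i₀ x).1 = bump x * t := by simp [characteristicField, hc]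
  obtain ⟨k, rfl⟩ := hn
  have hdet : (-2 * (bump x * t)) ^ (2 * k + 1) * (4 * t * (2 * bump x) ^ (2 * k + 1 - 1)) =
      -(4 * (2 * bump x) ^ (4 * k + 1) * (t ^ (k + 1)) ^ 2) := by
    rw [Nat.add_sub_cancel, neg_mul, Odd.neg_pow ⟨k, rfl⟩]
    ring
  rw [localSign, (reflectionField_characteristicField i₀).det_fderiv h,
    det_fderiv_characteristicField_snd hc, h1, hdet, sign_neg (neg_neg_of_pos (by positivity))]
  rfl

theorem southFiber_characteristicField (i₀ : Fin n) :
    southFiber (fun x ↦ reflectPole (characteristicField i₀ x)) =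
      {fun i ↦ (1 + Pi.single (M := fun _ ↦ ℝ) i₀ √(1 / 2) i) / 2,
        fun i ↦ (1 + Pi.single (M := fun _ ↦ ℝ) i₀ (-√(1 / 2)) i) / 2} := by
  have hcube {t : ℝ} (ht : t ^ 2 = 1 / 2) :
      (fun i ↦ (1 + Pi.single (M := fun _ ↦ ℝ) i₀ t i) / 2) ∈ cube n := fun i ↦ by
    have hi : |Pi.single (M := fun _ ↦ ℝ) i₀ t i| ≤ 1 := by
      rw [abs_le_one_iff_mul_self_le_one, ← sq]
      rcases eq_or_ne i i₀ with rfl | hi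
      · norm_num [ht]
      · simp [hi]
    constructor <;> linarith [abs_le.mp hi]
  have hsq {t : ℝ} : t ^ 2 = 1 / 2 ↔ t = √(1 / 2) ∨ t = -√(1 / 2) := by
    rw [← sq_eq_sq_iff_eq_or_eq_neg, Real.sq_sqrt (by norm_num)]
  ext x
  rw [(reflectionField_characteristicField i₀).mem_southFiber_iff, Set.mem_insert_iff,
    Set.mem_singleton_iff]
  constructor
  · rintro ⟨hx, h⟩
    obtain ⟨t, ht, hc⟩ := (characteristicField_snd_eq_zero_iff hx).mp h
    rw [centered_eq_iff] at hc
    rcases hsq.mp ht with rfl | rfl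
    exacts [.inl hc, .inr hc]
  · rintro (h | h) <;> rw [← centered_eq_iff] at h
    · have hx : x ∈ cube n := centered_eq_iff.mp h ▸ hcube (hsq.mpr (.inl rfl))
      exact ⟨hx, (characteristicField_snd_eq_zero_iff hx).mpr ⟨_, hsq.mpr (.inl rfl), h⟩⟩
    · have hx : x ∈ cube n := centered_eq_iff.mp h ▸ hcube (hsq.mpr (.inr rfl))
      exact ⟨hx, (characteristicField_snd_eq_zero_iff hx).mpr ⟨_, hsq.mpr (.inr rfl), h⟩⟩

theorem degree_characteristicField (hn : Odd n) (i₀ : Fin n) :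
    degree (fun x ↦ reflectPole (characteristicField i₀ x)) = -2 := by
  have hne : (fun i ↦ (1 + Pi.single (M := fun _ ↦ ℝ) i₀ √(1 / 2) i) / 2) ≠
      fun i ↦ (1 + Pi.single (M := fun _ ↦ ℝ) i₀ (-√(1 / 2)) i) / 2 := fun h ↦ by
    have h₀ := congrFun h i₀
    simp only [Pi.single_eq_same] at h₀
    linarith [Real.sqrt_pos.mpr (one_half_pos (α := ℝ))]
  rw [degree, finsum_mem_congr (t := southFiber _) rfl fun x hx ↦ by
    obtain ⟨hx, h⟩ := (reflectionField_characteristicField i₀).mem_southFiber_iff.mp hx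
    exact localSign_characteristicField hn hx h, southFiber_characteristicField,
    finsum_mem_pair hne]
  norm_num

end CharacteristicField

section FillingField

variable {n : ℕ} {i₀ : Fin n} {y : Fin (n + 1) → ℝ}

theorem det_fderiv_ne_zero_of_comp_perm {f : (Fin n → ℝ) → Fin n → ℝ} {x : Fin n → ℝ}
    {D : (Fin n → ℝ) →L[ℝ] (Fin n → ℝ)} (e : Equiv.Perm (Fin n)) (hf : DifferentiableAt ℝ f x)
    (hD : HasFDerivAt (fun x i ↦ f x (e i)) D x) (hdet : D.det ≠ 0) :
    (fderiv ℝ f x).det ≠ 0 := by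
  have hcomp : (D : (Fin n → ℝ) →ₗ[ℝ] (Fin n → ℝ)) =
      LinearMap.funLeft ℝ ℝ e ∘ₗ (fderiv ℝ f x : (Fin n → ℝ) →ₗ[ℝ] (Fin n → ℝ)) := by
    rw [hD.unique (hasFDerivAt_pi.mpr fun i ↦ hasFDerivAt_pi'.mp hf.hasFDerivAt (e i))]
    rfl
  rw [ContinuousLinearMap.det, hcomp, LinearMap.det_comp] at hdet
  exact right_ne_zero_of_mul hdet

/-- A reflection field on the cube of dimension `n + 1` that restricts to `characteristicField i₀`
on the face `y 0 = 0`, pushed into the hyperplane of the reflections that fix the base point, and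
that is constant up to scaling on the other faces. -/
noncomputable def fillingField (i₀ : Fin n) (y : Fin (n + 1) → ℝ) : ℝ × (Fin (n + 1) → ℝ) :=
  (bump (Fin.tail y) * (y 0 * (1 - y 0)),
    (1 - y 0) • Fin.cons (characteristicField i₀ (Fin.tail y)).1
      (characteristicField i₀ (Fin.tail y)).2 + y 0 • Pi.single i₀.succ 1)

theorem fillingField_snd_swap (j : Fin (n + 1)) :
    (fillingField i₀ y).2 (Equiv.swap 0 i₀.succ j) =
      Fin.cons (α := fun _ ↦ ℝ) ((1 - y 0) * (radiusSq (Fin.tail y) - 1 / 2) + y 0)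
        (fun i ↦ ((1 - y 0) * bump (Fin.tail y)) * centered (Fin.tail y) i) j := by
  cases j using Fin.cases with
  | zero => simp [fillingField, characteristicField_snd_self]
  | succ i =>
    rcases eq_or_ne i i₀ with rfl | hi
    · simp [fillingField, characteristicField, mul_assoc, -Fin.cons_update]
    · rw [Equiv.swap_apply_of_ne_of_ne (Fin.succ_ne_zero i) (Fin.succ_injective n |>.ne hi)]
      simp [fillingField, characteristicField_snd_of_ne hi, hi, mul_assoc]

theorem fillingField_of_apply_zero_eq_zero (hy : y 0 = 0) :
    fillingField i₀ y = (0, Fin.cons (characteristicField i₀ (Fin.tail y)).1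
      (characteristicField i₀ (Fin.tail y)).2) := by
  simp [fillingField, hy]

theorem exists_fillingField_eq_smul (hy₀ : y 0 ∈ Set.Icc (0 : ℝ) 1)
    (hy : y 0 = 1 ∨ Fin.tail y ∈ cubeBoundary n) :
    ∃ c : ℝ, 0 < c ∧ fillingField i₀ y = (0, c • Pi.single i₀.succ 1) := by
  rcases hy with hy | hy
  · exact ⟨1, one_pos, by simp [fillingField, hy]⟩
  · have hr : 0 < radiusSq (Fin.tail y) - 1 / 2 := by linarith [one_le_radiusSq hy]
    refine ⟨(1 - y 0) * (radiusSq (Fin.tail y) - 1 / 2) + y 0 * 1,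
      one_sub_mul_add_mul_pos hy₀ hr one_pos, ?_⟩
    have hsmul (r : ℝ) : (Fin.cons 0 (r • Pi.single i₀ 1) : Fin (n + 1) → ℝ) =
        r • Pi.single i₀.succ 1 := by
      ext j
      cases j using Fin.cases <;> simp [Pi.single_apply]
    rw [fillingField, characteristicField_of_mem_cubeBoundary hy, hsmul, smul_smul, ← add_smul,
      bump_eq_zero hy, zero_mul, mul_one]

theorem cons_const_mem_openCube :
    (Fin.cons (1 / 3) fun _ ↦ 1 / 2 : Fin (n + 1) → ℝ) ∈ openCube (n + 1) := fun j ↦ by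
  cases j using Fin.cases <;> norm_num

theorem fillingField_snd_eq_zero_iff (hy : y ∈ cube (n + 1)) :
    (fillingField i₀ y).2 = 0 ↔ y = Fin.cons (1 / 3) fun _ ↦ 1 / 2 := by
  have hz : (fillingField i₀ y).2 = 0 ↔
      (1 - y 0) * (radiusSq (Fin.tail y) - 1 / 2) + y 0 = 0 ∧
        ∀ i, ((1 - y 0) * bump (Fin.tail y)) * centered (Fin.tail y) i = 0 := by
    rw [funext_iff, ← (Equiv.swap 0 i₀.succ).forall_congr_right]
    simp only [fillingField_snd_swap, Pi.zero_apply, Fin.forall_fin_succ, Fin.cons_zero,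
      Fin.cons_succ]
  rw [hz]
  constructor
  · rintro ⟨h₀, h⟩
    have hbd : Fin.tail y ∉ cubeBoundary n := fun hb ↦ by
      have := one_sub_mul_add_mul_pos (hy 0) (u := radiusSq (Fin.tail y) - 1 / 2)
        (by linarith [one_le_radiusSq hb]) one_pos
      linarith
    have h1 : 1 - y 0 ≠ 0 := fun h1 ↦ by
      rw [h1] at h₀
      linarith
    have hc : centered (Fin.tail y) = 0 := funext fun i ↦ (mul_eq_zero.mp (h i)).resolve_left
      (mul_ne_zero h1 (bump_pos (mem_openCube (fun i ↦ hy i.succ) hbd)).ne')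
    have hr : radiusSq (Fin.tail y) = 0 := by simp [radiusSq, hc]
    rw [centered_eq_iff] at hc
    rw [← Fin.cons_self_tail y, hc, show y 0 = 1 / 3 by rw [hr] at h₀; linarith]
    simp
  · rintro rfl
    have hc : centered (fun _ ↦ 1 / 2 : Fin n → ℝ) = 0 := by simp [centered_eq_iff]
    norm_num [radiusSq, hc]

theorem hasFDerivAt_tail (y : Fin (n + 1) → ℝ) :
    HasFDerivAt (Fin.tail : (Fin (n + 1) → ℝ) → Fin n → ℝ)
      (ContinuousLinearMap.pi fun i ↦
        (ContinuousLinearMap.proj i.succ : (Fin (n + 1) → ℝ) →L[ℝ] ℝ)) y :=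
  hasFDerivAt_pi.mpr fun i ↦ hasFDerivAt_apply i.succ y

theorem reflectionField_fillingField (i₀ : Fin n) : ReflectionField (fillingField i₀) := by
  have htail : Differentiable ℝ (Fin.tail : (Fin (n + 1) → ℝ) → Fin n → ℝ) := fun y ↦
    (hasFDerivAt_tail y).differentiableAt
  refine ⟨?_, fun y hy h ↦ ?_, fun y hb ↦ ?_⟩
  · refine Differentiable.prodMk (by fun_prop) (differentiable_pi.mpr fun j ↦ ?_)
    have hX := (reflectionField_characteristicField i₀).differentiable.comp htail
    refine .add (.mul (by fun_prop) ?_) (by fun_prop)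
    cases j using Fin.cases with
    | zero => exact hX.fst
    | succ i => exact differentiable_pi.mp hX.snd i
  · have hz := (fillingField_snd_eq_zero_iff hy).mp (congrArg Prod.snd h)
    have hbump : 0 < bump (fun _ ↦ 1 / 2 : Fin n → ℝ) := bump_pos const_half_mem_openCube
    have h1 : bump (fun _ ↦ 1 / 2 : Fin n → ℝ) * (1 / 3 * (1 - 1 / 3)) = 0 := by
      simpa [fillingField, hz] using congrArg Prod.fst h
    linarith
  · obtain ⟨j, hj⟩ := hb
    cases j using Fin.cases with
    | zero => rcases hj with hj | hj <;> simp [fillingField, hj]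
    | succ i => simp [fillingField, bump_eq_zero (x := Fin.tail y) ⟨i, hj⟩]

theorem hasFDerivAt_fillingField_snd_swap (hy : y = Fin.cons (1 / 3) fun _ ↦ 1 / 2) :
    HasFDerivAt (fun y j ↦ (fillingField i₀ y).2 (Equiv.swap 0 i₀.succ j))
      (toLin' (diagonal (Fin.cons (3 / 2) fun _ ↦ 4 / 3))).toContinuousLinearMap y := by
  have htail : Fin.tail y = fun _ ↦ 1 / 2 := by rw [hy, Fin.tail_cons]
  have hc : centered (Fin.tail y) = Pi.single i₀ 0 := by simp [htail, centered_eq_iff]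
  have hb : bump (Fin.tail y) = 1 := by simp [bump, hc]
  have hy₀ : y 0 = 1 / 3 := by rw [hy, Fin.cons_zero]
  have hr : radiusSq (Fin.tail y) = 0 := by simp [radiusSq_eq_sq hc]
  have h₀ : HasFDerivAt (fun y : Fin (n + 1) → ℝ ↦ 1 - y 0)
      (-(ContinuousLinearMap.proj 0 : (Fin (n + 1) → ℝ) →L[ℝ] ℝ)) y :=
    (hasFDerivAt_apply (0 : Fin (n + 1)) y).const_sub 1
  refine hasFDerivAt_pi'.mpr fun j ↦ ?_
  simp only [fillingField_snd_swap]
  cases j using Fin.cases with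
  | zero =>
    refine ((h₀.mul (((hasFDerivAt_radiusSq hc).comp y (hasFDerivAt_tail y)).sub_const _)).add
      (hasFDerivAt_apply (0 : Fin (n + 1)) y)).congr_fderiv ?_
    ext v
    simp [mulVec_diagonal, hr]
    ring
  | succ i =>
    refine (hasFDerivAt_smul_of_eq_zero (h₀.differentiableAt.mul
      ((differentiable_bump _).comp y (hasFDerivAt_tail y).differentiableAt))
      ((hasFDerivAt_centered i _).comp y (hasFDerivAt_tail y)) (by simp [hc])).congr_fderiv ?_
    ext v
    simp [mulVec_diagonal, hb, hy₀]
    ring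

theorem southFiber_fillingField (i₀ : Fin n) :
    southFiber (fun y ↦ reflectPole (fillingField i₀ y)) = {Fin.cons (1 / 3) fun _ ↦ 1 / 2} := by
  ext y
  rw [(reflectionField_fillingField i₀).mem_southFiber_iff, Set.mem_singleton_iff]
  refine ⟨fun ⟨hy, h⟩ ↦ (fillingField_snd_eq_zero_iff hy).mp h, fun h ↦ ?_⟩
  have hy : y ∈ cube (n + 1) := h ▸ openCube_subset_cube cons_const_mem_openCube
  exact ⟨hy, (fillingField_snd_eq_zero_iff hy).mpr h⟩

theorem transverse_fillingField (i₀ : Fin n) :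
    Transverse fun y ↦ reflectPole (fillingField i₀ y) := by
  have hV := reflectionField_fillingField i₀
  refine hV.transverse fun y hy h ↦ det_fderiv_ne_zero_of_comp_perm _
    hV.differentiable.snd.differentiableAt
    (hasFDerivAt_fillingField_snd_swap ((fillingField_snd_eq_zero_iff hy).mp h)) ?_
  simp [ContinuousLinearMap.det, Fin.prod_univ_succ]

end FillingField

section SpecialOrthogonal

variable {n : ℕ}

theorem dotProduct_self_coe (x : UnitSphere n) :
    ((x : EuclideanSpace ℝ (Fin (n + 1))) : Fin (n + 1) → ℝ) ⬝ᵥ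
      (x : EuclideanSpace ℝ (Fin (n + 1))) = 1 := by
  have h := EuclideanSpace.real_norm_sq_eq (x : EuclideanSpace ℝ (Fin (n + 1)))
  rw [norm_eq_of_mem_sphere, one_pow] at h
  simpa [dotProduct, sq] using h.symm

/-- The special orthogonal group of size `n` over the reals. -/
abbrev SO (n : ℕ) := specialOrthogonalGroup (Fin n) ℝ

theorem transpose_mul_self_coe (A : SO n) : A.1ᵀ * A.1 = 1 :=
  mem_orthogonalGroup_iff' (Fin n) ℝ |>.mp (mem_specialOrthogonalGroup_iff.mp A.2).1

theorem continuous_SO_inv : Continuous fun A : SO n ↦ A⁻¹ :=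
  continuous_subtype_val.matrix_transpose.subtype_mk _

/-- The bundle projection `SO(n + 1) → Sⁿ` that sends a rotation to the image of the base point. -/
def orbitMap (n : ℕ) : C(SO (n + 1), UnitSphere n) where
  toFun A := ⟨WithLp.toLp 2 (A.1 *ᵥ Pi.single 0 1), by
    rw [mem_sphere_zero_iff_norm, ← sq_eq_sq₀ (norm_nonneg _) zero_le_one,
      EuclideanSpace.real_norm_sq_eq]
    have h : (A.1 *ᵥ Pi.single 0 1) ⬝ᵥ (A.1 *ᵥ Pi.single 0 1) = 1 := by
      rw [dotProduct_mulVec, vecMul_mulVec, ← mulVec_transpose]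
      simp [transpose_mul_self_coe]
    simpa [dotProduct, sq] using h⟩
  continuous_toFun := by fun_prop

theorem ofLp_orbitMap (A : SO (n + 1)) :
    (orbitMap n A : EuclideanSpace ℝ (Fin (n + 1))).ofLp = A.1 *ᵥ Pi.single 0 1 := rfl

theorem orbitMap_one : orbitMap n 1 = spherePole n := by
  refine Subtype.ext (WithLp.ofLp_injective 2 ?_)
  rw [ofLp_orbitMap, OneMemClass.coe_one, one_mulVec]
  rfl

/-- The block diagonal matrix with the blocks `1` and `A`. -/
def blockMatrix (A : Matrix (Fin n) (Fin n) ℝ) : Matrix (Fin (n + 1)) (Fin (n + 1)) ℝ :=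
  of fun i k ↦ if hi : i = 0 then (if k = 0 then 1 else 0)
    else if hk : k = 0 then 0 else A (i.pred hi) (k.pred hk)

theorem cons_one_zero : (Fin.cons 1 0 : Fin (n + 1) → ℝ) = Pi.single 0 1 := by
  ext i
  cases i using Fin.cases <;> simp

theorem blockMatrix_mulVec_cons (A : Matrix (Fin n) (Fin n) ℝ) (a : ℝ) (v : Fin n → ℝ) :
    blockMatrix A *ᵥ (Fin.cons a v : Fin (n + 1) → ℝ) = Fin.cons a (A *ᵥ v) := by
  ext i
  cases i using Fin.cases <;> simp [blockMatrix, mulVec, dotProduct, Fin.sum_univ_succ]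

theorem ext_of_mulVec_cons {A B : Matrix (Fin (n + 1)) (Fin (n + 1)) ℝ}
    (h : ∀ (a : ℝ) (v : Fin n → ℝ), A *ᵥ (Fin.cons a v : Fin (n + 1) → ℝ) = B *ᵥ Fin.cons a v) :
    A = B :=
  ext_of_mulVec_single fun i ↦ by
    rw [← Fin.cons_self_tail (Pi.single i 1 : Fin (n + 1) → ℝ)]
    exact h _ _

theorem blockMatrix_one : blockMatrix (1 : Matrix (Fin n) (Fin n) ℝ) = 1 :=
  ext_of_mulVec_cons fun a v ↦ by simp only [blockMatrix_mulVec_cons, one_mulVec]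

theorem blockMatrix_mul (A B : Matrix (Fin n) (Fin n) ℝ) :
    blockMatrix (A * B) = blockMatrix A * blockMatrix B :=
  ext_of_mulVec_cons fun a v ↦ by simp only [← mulVec_mulVec, blockMatrix_mulVec_cons]

theorem submatrix_succ_blockMatrix (A : Matrix (Fin n) (Fin n) ℝ) :
    (blockMatrix A).submatrix Fin.succ Fin.succ = A := by
  ext i k
  simp [blockMatrix]

theorem blockMatrix_injective :
    Function.Injective (blockMatrix : Matrix (Fin n) (Fin n) ℝ → _) :=
  Function.LeftInverse.injective (g := fun A ↦ A.submatrix Fin.succ Fin.succ)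
    fun A ↦ submatrix_succ_blockMatrix A

theorem blockMatrix_transpose (A : Matrix (Fin n) (Fin n) ℝ) :
    (blockMatrix A)ᵀ = blockMatrix Aᵀ := by
  ext i k
  cases i using Fin.cases <;> cases k using Fin.cases <;> simp [blockMatrix]

theorem det_blockMatrix (A : Matrix (Fin n) (Fin n) ℝ) : (blockMatrix A).det = A.det := by
  have hsub : (blockMatrix A).submatrix Fin.succ (Fin.succAbove 0) = A := by
    simpa using submatrix_succ_blockMatrix A
  rw [det_succ_row_zero, Fin.sum_univ_succ, hsub]
  simp [blockMatrix]

theorem blockMatrix_mem_specialOrthogonalGroup_iff {A : Matrix (Fin n) (Fin n) ℝ} :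
    blockMatrix A ∈ specialOrthogonalGroup (Fin (n + 1)) ℝ ↔
      A ∈ specialOrthogonalGroup (Fin n) ℝ := by
  rw [mem_specialOrthogonalGroup_iff, mem_specialOrthogonalGroup_iff, mem_orthogonalGroup_iff,
    mem_orthogonalGroup_iff, ← blockMatrix_one, blockMatrix_transpose, ← blockMatrix_mul,
    blockMatrix_injective.eq_iff, det_blockMatrix]

/-- The block inclusion `SO(n) → SO(n + 1)` as the stabilizer of the base point of the sphere. -/
def blockInclusion (n : ℕ) : SO n →ₜ* SO (n + 1) where
  toFun A := ⟨blockMatrix A.1, blockMatrix_mem_specialOrthogonalGroup_iff.mpr A.2⟩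
  map_one' := Subtype.ext blockMatrix_one
  map_mul' A B := Subtype.ext (blockMatrix_mul A.1 B.1)
  continuous_toFun := by
    refine Continuous.subtype_mk (continuous_matrix fun i k ↦ ?_) _
    cases i using Fin.cases <;> cases k using Fin.cases <;> simp only [blockMatrix, of_apply]
    all_goals first
      | exact continuous_const
      | exact continuous_subtype_val.matrix_elem _ _

theorem coe_blockInclusion (A : SO n) : (blockInclusion n A).1 = blockMatrix A.1 := rfl

theorem blockInclusion_injective : Function.Injective (blockInclusion n) := fun _ _ h ↦
  Subtype.ext (blockMatrix_injective (congrArg Subtype.val h))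

theorem continuous_of_blockInclusion_comp {T : Type*} [TopologicalSpace T] {B : T → SO n}
    (h : Continuous fun t ↦ blockInclusion n (B t)) : Continuous B := by
  rw [Topology.IsInducing.subtypeVal.continuous_iff]
  simpa only [Function.comp_def, coe_blockInclusion, submatrix_succ_blockMatrix] using
    (continuous_subtype_val.comp h).matrix_submatrix Fin.succ Fin.succ

theorem exists_blockMatrix_eq {A : Matrix (Fin (n + 1)) (Fin (n + 1)) ℝ}
    (h : A *ᵥ Pi.single 0 1 = Pi.single 0 1) (h' : Aᵀ *ᵥ Pi.single 0 1 = Pi.single 0 1) :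
    ∃ B, blockMatrix B = A := by
  refine ⟨A.submatrix Fin.succ Fin.succ, ?_⟩
  rw [mulVec_single_one] at h h'
  ext i k
  have hcol : A i 0 = Pi.single (M := fun _ ↦ ℝ) 0 1 i := congrFun h i
  have hrow : A 0 k = Pi.single (M := fun _ ↦ ℝ) 0 1 k := congrFun h' k
  cases i using Fin.cases <;> cases k using Fin.cases <;> simp_all [blockMatrix]

theorem orbitMap_blockInclusion (A : SO n) : orbitMap n (blockInclusion n A) = spherePole n := by
  refine Subtype.ext (WithLp.ofLp_injective 2 ?_)
  rw [ofLp_orbitMap, coe_blockInclusion, ← cons_one_zero, blockMatrix_mulVec_cons, mulVec_zero,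
    cons_one_zero]
  rfl

theorem exists_eq_mul_blockInclusion {A B : SO (n + 1)} (h : orbitMap n A = orbitMap n B) :
    ∃ C, A = B * blockInclusion n C := by
  have hAB : A.1 *ᵥ Pi.single 0 1 = B.1 *ᵥ Pi.single 0 1 := by
    rw [← ofLp_orbitMap, h, ofLp_orbitMap]
  have hC : (B⁻¹ * A).1 *ᵥ Pi.single 0 1 = Pi.single 0 1 := by
    change (B.1ᵀ * A.1) *ᵥ _ = _
    rw [← mulVec_mulVec, hAB, mulVec_mulVec, transpose_mul_self_coe, one_mulVec]
  have hC' : (B⁻¹ * A).1ᵀ *ᵥ Pi.single 0 1 = Pi.single 0 1 := by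
    nth_rw 1 [← hC]
    rw [mulVec_mulVec, transpose_mul_self_coe, one_mulVec]
  obtain ⟨C, hBC⟩ := exists_blockMatrix_eq hC hC'
  refine ⟨⟨C, blockMatrix_mem_specialOrthogonalGroup_iff.mp (hBC ▸ (B⁻¹ * A).2)⟩, ?_⟩
  rw [← inv_mul_eq_iff_eq_mul]
  exact Subtype.ext hBC.symm

end SpecialOrthogonal

section Rotation

variable {n : ℕ}

theorem householder_smul {m : Type*} [Fintype m] [DecidableEq m] {c : ℝ} (hc : c ≠ 0) (u : m → ℝ) :
    householder (c • u) = householder u := by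
  refine ext_of_mulVec_single fun i ↦ ?_
  simp only [householder_mulVec, smul_dotProduct, dotProduct_smul, smul_eq_mul, smul_smul]
  congr 2
  field_simp

theorem householder_cons_zero (u : Fin n → ℝ) :
    householder (Fin.cons 0 u : Fin (n + 1) → ℝ) = blockMatrix (householder u) := by
  refine ext_of_mulVec_cons fun a v ↦ ?_
  rw [blockMatrix_mulVec_cons, householder_mulVec, householder_mulVec]
  ext i
  cases i using Fin.cases <;> simp [dotProduct, Fin.sum_univ_succ]

theorem householder_mulVec_of_dotProduct_eq_zero {m : Type*} [Fintype m] [DecidableEq m]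
    {u v : m → ℝ} (h : u ⬝ᵥ v = 0) : householder u *ᵥ v = v := by
  simp [householder_mulVec, h]

/-- The rotation that is the composite of the reflections in the hyperplanes orthogonal to `w` and
to `v`. -/
noncomputable def rotation (v w : Fin n → ℝ) (hv : v ≠ 0) (hw : w ≠ 0) : SO n :=
  ⟨householder v * householder w, by
    rw [mem_specialOrthogonalGroup_iff, mem_orthogonalGroup_iff', transpose_mul,
      householder_transpose, householder_transpose, Matrix.mul_assoc,
      ← Matrix.mul_assoc (householder v), householder_mul_self hv, Matrix.one_mul,
      householder_mul_self hw, det_mul, det_householder hv, det_householder hw]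
    norm_num⟩

theorem coe_rotation (v w : Fin n → ℝ) (hv : v ≠ 0) (hw : w ≠ 0) :
    (rotation v w hv hw).1 = householder v * householder w := rfl

theorem continuous_rotation {T : Type*} [TopologicalSpace T] {v w : T → Fin n → ℝ}
    (hv : Continuous v) (hw : Continuous w) (hv0 : ∀ t, v t ≠ 0) (hw0 : ∀ t, w t ≠ 0) :
    Continuous fun t ↦ rotation (v t) (w t) (hv0 t) (hw0 t) :=
  ((continuous_householder_comp hv hv0).matrix_mul
    (continuous_householder_comp hw hw0)).subtype_mk _

theorem rotation_smul_left {c : ℝ} (hc : c ≠ 0) {v w : Fin n → ℝ} (hv : v ≠ 0) (hw : w ≠ 0) :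
    rotation (c • v) w (smul_ne_zero hc hv) hw = rotation v w hv hw :=
  Subtype.ext (by rw [coe_rotation, coe_rotation, householder_smul hc])

theorem rotation_self {v : Fin n → ℝ} (hv : v ≠ 0) : rotation v v hv hv = 1 :=
  Subtype.ext (householder_mul_self hv)

theorem cons_zero_ne_zero {v : Fin n → ℝ} (hv : v ≠ 0) : (Fin.cons 0 v : Fin (n + 1) → ℝ) ≠ 0 :=
  fun h ↦ hv (funext fun i ↦ congrFun h i.succ)

theorem rotation_cons_zero {v w : Fin n → ℝ} (hv : v ≠ 0) (hw : w ≠ 0) :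
    rotation (Fin.cons 0 v) (Fin.cons 0 w) (cons_zero_ne_zero hv) (cons_zero_ne_zero hw) =
      blockInclusion n (rotation v w hv hw) :=
  Subtype.ext (by
    simp only [coe_rotation, coe_blockInclusion, householder_cons_zero, blockMatrix_mul])

theorem rotation_add_mulVec {u w : Fin n → ℝ} (hu : u ≠ 0) (huw : u + w ≠ 0)
    (h : u ⬝ᵥ u = w ⬝ᵥ w) : (rotation (u + w) u huw hu).1 *ᵥ u = w := by
  have huu : u ⬝ᵥ u ≠ 0 := by rwa [Ne, dotProduct_self_eq_zero]
  have hsum : (u + w) ⬝ᵥ (u + w) ≠ 0 := by rwa [Ne, dotProduct_self_eq_zero]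
  have hdot : (u + w) ⬝ᵥ (u + w) = 2 * ((u + w) ⬝ᵥ u) := by
    simp only [add_dotProduct, dotProduct_add, ← h, dotProduct_comm w u]
    ring
  have hflip : householder u *ᵥ u = -u := by
    rw [householder_mulVec, mul_div_cancel_right₀ _ huu]
    module
  rw [coe_rotation, ← mulVec_mulVec, hflip, mulVec_neg, householder_mulVec, ← hdot, div_self hsum]
  module

end Rotation

section HomotopyLifting

variable {n : ℕ} {T : Type*} [TopologicalSpace T]

theorem add_ne_zero_of_dist_lt_two {x y : UnitSphere n} (h : dist x y < 2) :
    (x : EuclideanSpace ℝ (Fin (n + 1))) + y ≠ 0 := by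
  intro h0
  refine h.ne ?_
  rw [Subtype.dist_eq, dist_eq_norm, eq_neg_of_add_eq_zero_left h0, ← neg_add', norm_neg,
    ← two_smul ℝ, norm_smul, norm_eq_of_mem_sphere]
  norm_num

theorem exists_lift_of_dist_lt_two {h : T → SO (n + 1)} (hh : Continuous h)
    {g : T → UnitSphere n} (hg : Continuous g) (hgh : ∀ t, dist (orbitMap n (h t)) (g t) < 2) :
    ∃ h' : T → SO (n + 1), Continuous h' ∧ (∀ t, orbitMap n (h' t) = g t) ∧
      ∀ t, orbitMap n (h t) = g t → h' t = h t := by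
  let u (t : T) : Fin (n + 1) → ℝ := (orbitMap n (h t) : EuclideanSpace ℝ (Fin (n + 1))).ofLp
  let w (t : T) : Fin (n + 1) → ℝ := (g t : EuclideanSpace ℝ (Fin (n + 1))).ofLp
  have hu : Continuous u := by fun_prop
  have hw : Continuous w := by fun_prop
  have hu0 (t : T) : u t ≠ 0 := fun h0 ↦ by
    simpa [u, h0] using dotProduct_self_coe (orbitMap n (h t))
  have huw (t : T) : u t + w t ≠ 0 := fun h0 ↦
    add_ne_zero_of_dist_lt_two (hgh t) (WithLp.ofLp_injective 2 h0)
  refine ⟨fun t ↦ rotation (u t + w t) (u t) (huw t) (hu0 t) * h t,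
    (continuous_rotation (hu.add hw) hu huw hu0).mul hh, fun t ↦ ?_, fun t ht ↦ ?_⟩
  · refine Subtype.ext (WithLp.ofLp_injective 2 ?_)
    rw [ofLp_orbitMap, Submonoid.coe_mul, ← mulVec_mulVec, ← ofLp_orbitMap]
    exact rotation_add_mulVec (hu0 t) (huw t)
      ((dotProduct_self_coe _).trans (dotProduct_self_coe _).symm)
  · have hadd : u t + w t = (2 : ℝ) • u t := by
      rw [two_smul]
      simp only [u, w, ht]
    simp only [hadd, rotation_smul_left two_ne_zero (hu0 t), rotation_self, one_mul]

theorem exists_lift_homotopy [CompactSpace T] {K : I × T → UnitSphere n} (hK : Continuous K)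
    {h : T → SO (n + 1)} (hh : Continuous h) (h0 : ∀ t, orbitMap n (h t) = K (0, t)) :
    ∃ h' : T → SO (n + 1), Continuous h' ∧ (∀ t, orbitMap n (h' t) = K (1, t)) ∧
      ∀ t, (∀ s, K (s, t) = K (0, t)) → h' t = h t := by
  let c : C(I, C(T, UnitSphere n)) := ContinuousMap.curry ⟨K, hK⟩
  let Extends (a b : I) : Prop := ∀ h : T → SO (n + 1), Continuous h →
    (∀ t, orbitMap n (h t) = c a t) → ∃ h' : T → SO (n + 1), Continuous h' ∧
      (∀ t, orbitMap n (h' t) = c b t) ∧ ∀ t, (∀ s, c s t = c 0 t) → h' t = h t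
  have extends_of_dist_lt {a b : I} (hab : dist (c a) (c b) < 2) : Extends a b := by
    intro h hh hc
    have hdist (t : T) : dist (orbitMap n (h t)) (c b t) < 2 := by
      rw [hc]
      exact (ContinuousMap.dist_apply_le_dist t).trans_lt hab
    obtain ⟨h', hh', hc', heq⟩ := exists_lift_of_dist_lt_two hh (map_continuous (c b)) hdist
    exact ⟨h', hh', hc', fun t ht ↦ heq t (by rw [hc, ht a, ht b])⟩
  have extends_trans : IsTrans I Extends := ⟨fun a b d hab hbd h hh hc ↦ by
    obtain ⟨h₁, hh₁, hc₁, heq₁⟩ := hab h hh hc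
    obtain ⟨h₂, hh₂, hc₂, heq₂⟩ := hbd h₁ hh₁ hc₁
    exact ⟨h₂, hh₂, hc₂, fun t ht ↦ (heq₂ t ht).trans (heq₁ t ht)⟩⟩
  refine PreconnectedSpace.induction₂' Extends (fun a ↦ ?_) extends_trans 0 1 h hh h0
  have hball : ∀ᶠ b in 𝓝 a, dist (c b) (c a) < 2 :=
    (map_continuous c).continuousAt.eventually (Metric.ball_mem_nhds (c a) two_pos)
  filter_upwards [hball] with b hb
  exact ⟨extends_of_dist_lt (dist_comm (c b) (c a) ▸ hb), extends_of_dist_lt hb⟩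

end HomotopyLifting

section ConnectingHomomorphism

variable {n k : ℕ}

/-- The union of the faces of the cube other than the face on which the first coordinate
vanishes. -/
def otherFaces (n : ℕ) : Set (I^(Fin (n + 1))) :=
  {y | y 0 = 1 ∨ Fin.tail y ∈ Cube.boundary (Fin n)}

theorem mem_boundary_iff {y : I^(Fin (n + 1))} :
    y ∈ Cube.boundary (Fin (n + 1)) ↔ y 0 = 0 ∨ y ∈ otherFaces n := by
  change (∃ i, _) ↔ y 0 = 0 ∨ (y 0 = 1 ∨ ∃ i, _)
  rw [Fin.exists_fin_succ, or_assoc]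
  rfl

theorem update_succ_mem_otherFaces {ρ : I → I} (h0 : ρ 0 = 0 ∨ ρ 0 = 1) (h1 : ρ 1 = 0 ∨ ρ 1 = 1)
    (i : Fin n) {y : I^(Fin (n + 1))} (hy : y ∈ otherFaces n) :
    Function.update y i.succ (ρ (y i.succ)) ∈ otherFaces n := by
  refine hy.imp (fun h ↦ ?_) fun h ↦ ?_
  · rwa [Function.update_of_ne (Fin.succ_ne_zero i).symm]
  · rw [Fin.tail_update_succ]
    exact update_mem_boundary h0 h1 i h

theorem update_succ_mem_otherFaces_of_eq {a : I} (ha : a = 0 ∨ a = 1) (i : Fin n)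
    (y : I^(Fin (n + 1))) : Function.update y i.succ a ∈ otherFaces n :=
  Or.inr ⟨i, by simpa [Fin.tail] using ha⟩

theorem continuous_cons_cube :
    Continuous fun w : I × (I^(Fin n)) ↦ (Fin.cons w.1 w.2 : I^(Fin (n + 1))) :=
  Continuous.finCons (A := fun _ ↦ I) continuous_fst continuous_snd

theorem cons_one_mem_otherFaces (y : I^(Fin n)) : (Fin.cons 1 y : I^(Fin (n + 1))) ∈ otherFaces n :=
  Or.inl rfl

theorem cons_mem_otherFaces (t : I) {y : I^(Fin n)} (hy : y ∈ Cube.boundary (Fin n)) :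
    (Fin.cons t y : I^(Fin (n + 1))) ∈ otherFaces n :=
  Or.inr hy

/-- The relation that defines the connecting homomorphism: the map `h` on the cube lifts the loop
`f` in the sphere, is equal to the loop `z` in `SO(k)` on the face on which the first coordinate
vanishes, and is trivial on the other faces. -/
structure IsConnectingLift (h : (I^(Fin (n + 1))) → SO (k + 1))
    (f : Ω^ (Fin (n + 1)) (UnitSphere k) (spherePole k)) (z : Ω^ (Fin n) (SO k) 1) : Prop where
  continuous : Continuous h
  orbitMap_eq : ∀ y, orbitMap k (h y) = f y
  eq_blockInclusion : ∀ y, y 0 = 0 → h y = blockInclusion k (z (Fin.tail y))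
  eq_one : ∀ y ∈ otherFaces n, h y = 1

variable {h h' : (I^(Fin (n + 1))) → SO (k + 1)}
  {f f' : Ω^ (Fin (n + 1)) (UnitSphere k) (spherePole k)} {z z' : Ω^ (Fin n) (SO k) 1}

namespace IsConnectingLift

theorem transAt (i : Fin n) (L : IsConnectingLift h f z) (L' : IsConnectingLift h' f' z') :
    IsConnectingLift
      (fun y ↦ if (y i.succ : ℝ) ≤ 1 / 2
        then h (Function.update y i.succ <| Set.projIcc 0 1 zero_le_one (2 * y i.succ))
        else h' (Function.update y i.succ <| Set.projIcc 0 1 zero_le_one (2 * y i.succ - 1)))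
      (GenLoop.transAt i.succ f f') (GenLoop.transAt i z z') where
  continuous := by
    refine Continuous.if_le
      (L.continuous.comp (continuous_id.update _ (continuous_projIcc.comp (by fun_prop))))
      (L'.continuous.comp (continuous_id.update _ (continuous_projIcc.comp (by fun_prop))))
      (by fun_prop) (by fun_prop) fun y hy ↦ ?_
    rw [L.eq_one _ (update_succ_mem_otherFaces_of_eq (by simp [hy]) i y),
      L'.eq_one _ (update_succ_mem_otherFaces_of_eq (by simp [hy]) i y)]
  orbitMap_eq y := by
    rw [transAt_apply, apply_ite (orbitMap k), L.orbitMap_eq, L'.orbitMap_eq]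
  eq_blockInclusion y hy := by
    have hupd (a : I) : Function.update y i.succ a 0 = 0 := by
      rwa [Function.update_of_ne (Fin.succ_ne_zero i).symm]
    rw [transAt_apply, apply_ite (blockInclusion k), L.eq_blockInclusion _ (hupd _),
      L'.eq_blockInclusion _ (hupd _), Fin.tail_update_succ, Fin.tail_update_succ]
    rfl
  eq_one y hy := by
    rw [L.eq_one, L'.eq_one, ite_self]
    · exact update_succ_mem_otherFaces (ρ := fun u ↦ Set.projIcc 0 1 zero_le_one (2 * (u : ℝ) - 1))
        (by simp) (by norm_num) i hy
    · exact update_succ_mem_otherFaces (ρ := fun u ↦ Set.projIcc 0 1 zero_le_one (2 * (u : ℝ)))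
        (by simp) (by simp) i hy

theorem symmAt (i : Fin n) (L : IsConnectingLift h f z) :
    IsConnectingLift (fun y ↦ h (Function.update y i.succ (σ (y i.succ))))
      (GenLoop.symmAt i.succ f) (GenLoop.symmAt i z) where
  continuous := L.continuous.comp (by fun_prop)
  orbitMap_eq y := by rw [symmAt_apply, L.orbitMap_eq]
  eq_blockInclusion y hy := by
    rw [symmAt_apply, L.eq_blockInclusion, Fin.tail_update_succ]
    · rfl
    · rwa [Function.update_of_ne (Fin.succ_ne_zero i).symm]
  eq_one y hy := L.eq_one _ (update_succ_mem_otherFaces (by simp) (by simp) i hy)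

theorem const : IsConnectingLift (n := n) (fun _ ↦ (1 : SO (k + 1))) const const where
  continuous := continuous_const
  orbitMap_eq _ := orbitMap_one
  eq_blockInclusion _ _ := (map_one (blockInclusion k)).symm
  eq_one _ _ := rfl

theorem exists_of_loopClass_eq (L : IsConnectingLift h f z) (hf : loopClass f = loopClass f') :
    ∃ g, IsConnectingLift g f' z := by
  obtain ⟨K, hK, hK0, hK1, hKb⟩ := loopClass_eq_iff.mp hf
  obtain ⟨g, hg, hgK, hgh⟩ := exists_lift_homotopy hK L.continuous fun y ↦ by
    rw [L.orbitMap_eq, hK0]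
  have heq {y} (hy : y ∈ Cube.boundary (Fin (n + 1))) : g y = h y :=
    hgh y fun s ↦ by rw [hKb s y hy, hKb 0 y hy]
  refine ⟨g, hg, fun y ↦ by rw [hgK, hK1], fun y hy ↦ ?_, fun y hy ↦ ?_⟩
  · rw [heq (mem_boundary_iff.mpr (.inl hy)), L.eq_blockInclusion y hy]
  · rw [heq (mem_boundary_iff.mpr (.inr hy)), L.eq_one y hy]

theorem loopClass_eq (L : IsConnectingLift h f z) (L' : IsConnectingLift h' f z') :
    loopClass z = loopClass z' := by
  choose B hB using fun y ↦ exists_eq_mul_blockInclusion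
    ((L.orbitMap_eq y).trans (L'.orbitMap_eq y).symm)
  have hBcont : Continuous B := by
    refine continuous_of_blockInclusion_comp ?_
    simp only [← inv_mul_eq_iff_eq_mul.mpr (hB _)]
    exact (continuous_SO_inv.comp L'.continuous).mul L.continuous
  have hB1 {y} (hy : y ∈ otherFaces n) : B y = 1 := by
    have := hB y
    rw [L.eq_one y hy, L'.eq_one y hy, one_mul] at this
    exact blockInclusion_injective (this.symm.trans (map_one _).symm)
  have hB0 (y : I^(Fin n)) : z' y * B (Fin.cons 0 y) = z y := by
    have := hB (Fin.cons 0 y)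
    rw [L.eq_blockInclusion _ rfl, L'.eq_blockInclusion _ rfl, ← map_mul] at this
    exact (blockInclusion_injective this).symm
  refine loopClass_eq_iff.mpr ⟨fun w ↦ z' w.2 * B (Fin.cons w.1 w.2), ?_, hB0, ?_, ?_⟩
  · exact ((map_continuous z').comp continuous_snd).mul (hBcont.comp continuous_cons_cube)
  · intro y
    simp only [hB1 (cons_one_mem_otherFaces y), mul_one]
  · intro t y hy
    simp only [hB1 (cons_mem_otherFaces t hy), mul_one]
    exact z'.2 y hy

end IsConnectingLift

variable [Nonempty (Fin n)]

theorem piMap_blockInclusion_eq_one_iff :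
    piMap (blockInclusion k : C(SO k, SO (k + 1))) (loopClass z) = 1 ↔
      ∃ h f, IsConnectingLift h f z := by
  rw [piMap_loopClass_eq_one_iff]
  constructor
  · rintro ⟨H, hH, hH0, hH1, hHb⟩
    let h (y : I^(Fin (n + 1))) : SO (k + 1) := H (y 0, Fin.tail y)
    have hcont : Continuous h := hH.comp (by fun_prop)
    have hface (y : I^(Fin (n + 1))) (hy : y 0 = 0) :
        h y = blockInclusion k (z (Fin.tail y)) := by
      simp only [h, hy]
      exact hH0 _
    have hother (y : I^(Fin (n + 1))) (hy : y ∈ otherFaces n) : h y = 1 := by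
      rcases hy with hy | hy
      · simp only [h, hy]
        exact (hH1 _).trans (map_one (blockInclusion k))
      · exact (hHb _ _ hy).trans (map_one (blockInclusion k))
    refine ⟨h, ⟨(orbitMap k).comp ⟨h, hcont⟩, fun y hy ↦ ?_⟩, hcont, fun y ↦ rfl, hface, hother⟩
    change orbitMap k (h y) = _
    rcases mem_boundary_iff.mp hy with hy | hy
    · rw [hface y hy, orbitMap_blockInclusion]
    · rw [hother y hy, orbitMap_one]
  · rintro ⟨h, f, L⟩
    have hone {y : I^(Fin (n + 1))} (hy : y ∈ otherFaces n) : h y = blockInclusion k 1 :=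
      (L.eq_one y hy).trans (map_one (blockInclusion k)).symm
    exact ⟨fun w ↦ h (Fin.cons w.1 w.2), L.continuous.comp continuous_cons_cube,
      fun y ↦ L.eq_blockInclusion _ rfl, fun y ↦ hone (cons_one_mem_otherFaces y),
      fun t y hy ↦ hone (cons_mem_otherFaces t hy)⟩

/-- The graph of the connecting homomorphism of the fibration `SO(k) → SO(k + 1) → Sᵏ`. -/
def connectingGraph (n k : ℕ) [Nonempty (Fin n)] :
    Subgroup (HomotopyGroup (Fin (n + 1)) (UnitSphere k) (spherePole k) ×
      HomotopyGroup (Fin n) (SO k) 1) where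
  carrier := {c | ∃ h f z, IsConnectingLift h f z ∧ (loopClass f, loopClass z) = c}
  mul_mem' := by
    rintro _ _ ⟨h, f, z, L, rfl⟩ ⟨h', f', z', L', rfl⟩
    let i : Fin n := Classical.arbitrary _
    exact ⟨_, _, _, L'.transAt i L, Prod.ext (loopClass_mul _ _ _).symm (loopClass_mul _ _ _).symm⟩
  one_mem' := ⟨_, _, _, .const, rfl⟩
  inv_mem' := by
    rintro _ ⟨h, f, z, L, rfl⟩
    let i : Fin n := Classical.arbitrary _
    exact ⟨_, _, _, L.symmAt i, Prod.ext (loopClass_inv _ _).symm (loopClass_inv _ _).symm⟩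

theorem ker_piHom_blockInclusion (L : IsConnectingLift h f z)
    (hf : Subgroup.zpowers (loopClass f) = ⊤) :
    (piHom (N := Fin n) (x := 1) (blockInclusion k : C(SO k, SO (k + 1)))).ker =
      Subgroup.zpowers (loopClass z) := by
  refine le_antisymm (fun b hb ↦ ?_) ?_
  · obtain ⟨z', rfl⟩ := loopClass_surjective b
    obtain ⟨h', f', L'⟩ := piMap_blockInclusion_eq_one_iff.mp hb
    obtain ⟨r, hr⟩ := Subgroup.mem_zpowers_iff.mp (hf ▸ Subgroup.mem_top (loopClass f'))
    obtain ⟨g, f₁, z₁, L₁, heq⟩ := (connectingGraph n k).zpow_mem ⟨h, f, z, L, rfl⟩ r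
    obtain ⟨hf₁, hz₁⟩ := Prod.mk.inj heq
    obtain ⟨g', L₁'⟩ := L₁.exists_of_loopClass_eq (hf₁.trans hr)
    exact Subgroup.mem_zpowers_iff.mpr ⟨r, hz₁.symm.trans (L₁'.loopClass_eq L')⟩
  · exact Subgroup.zpowers_le.mpr (piMap_blockInclusion_eq_one_iff.mpr ⟨h, f, L⟩)

end ConnectingHomomorphism

section FieldRotation

variable {n : ℕ} {V : (Fin n → ℝ) → ℝ × (Fin n → ℝ)}

theorem single_succ (i : Fin n) :
    (Pi.single i.succ 1 : Fin (n + 1) → ℝ) = Fin.cons 0 (Pi.single i 1) := by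
  ext k
  cases k using Fin.cases <;> simp [Pi.single_apply]

theorem single_one_ne_zero (i : Fin n) : (Pi.single i 1 : Fin n → ℝ) ≠ 0 :=
  Pi.single_ne_zero_iff.mpr one_ne_zero

namespace ReflectionField

theorem cons_ne_zero (hV : ReflectionField V) (y : I^(Fin n)) :
    (Fin.cons (V (cubeCoe y)).1 (V (cubeCoe y)).2 : Fin (n + 1) → ℝ) ≠ 0 :=
  fun h ↦ hV.ne_zero _ (cubeCoe_mem_cube y)
    (Prod.ext (congrFun h 0) (funext fun i ↦ congrFun h i.succ))

/-- The family of rotations, parametrized by the cube, that is defined by a field of reflection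
axes: the reflection in the hyperplane orthogonal to the coordinate vector of index `i + 1`,
followed by the reflection along the field. -/
noncomputable def rotationMap (hV : ReflectionField V) (i : Fin n) : C(I^(Fin n), SO (n + 1)) where
  toFun y := rotation (Fin.cons (V (cubeCoe y)).1 (V (cubeCoe y)).2) (Pi.single i.succ 1)
    (hV.cons_ne_zero y) (single_one_ne_zero _)
  continuous_toFun := by
    have h : Continuous fun y ↦ V (cubeCoe y) :=
      hV.differentiable.continuous.comp continuous_cubeCoe
    exact continuous_rotation (Continuous.finCons (A := fun _ ↦ ℝ) h.fst h.snd) continuous_const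
      hV.cons_ne_zero fun _ ↦ single_one_ne_zero _

theorem rotationMap_apply (hV : ReflectionField V) (i : Fin n) (y : I^(Fin n)) :
    hV.rotationMap i y = rotation (Fin.cons (V (cubeCoe y)).1 (V (cubeCoe y)).2)
      (Pi.single i.succ 1) (hV.cons_ne_zero y) (single_one_ne_zero _) := rfl

theorem orbitMap_rotationMap (hV : ReflectionField V) (i : Fin n) (y : I^(Fin n)) :
    orbitMap n (hV.rotationMap i y) = toSphere (reflectPole (V (cubeCoe y))) := by
  refine (toSphere_reflectPole (hV.ne_zero _ (cubeCoe_mem_cube y)) ?_).symm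
  rw [ofLp_orbitMap, rotationMap_apply, coe_rotation, ← mulVec_mulVec,
    householder_mulVec_of_dotProduct_eq_zero (u := Pi.single i.succ 1) (by simp)]

theorem rotationMap_eq_one (hV : ReflectionField V) {i : Fin n} {y : I^(Fin n)} {c : ℝ}
    (hc : c ≠ 0) (hy : V (cubeCoe y) = (0, c • Pi.single i 1)) : hV.rotationMap i y = 1 := by
  have hcons : (Fin.cons (V (cubeCoe y)).1 (V (cubeCoe y)).2 : Fin (n + 1) → ℝ) =
      c • Pi.single i.succ 1 := by
    rw [hy, single_succ]
    ext k
    cases k using Fin.cases <;> simp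
  simp only [rotationMap_apply, hcons]
  rw [rotation_smul_left hc (single_one_ne_zero _), rotation_self]

end ReflectionField

end FieldRotation

section CharacteristicLoop

variable {n : ℕ}

/-- The loop in `SO(n + 1)` whose class is the image of a generator under the connecting
homomorphism; up to reparametrization it is the characteristic map of the bundle
`SO(n + 2) → Sⁿ⁺¹`. -/
noncomputable def characteristicLoop (i₀ : Fin n) : Ω^ (Fin n) (SO (n + 1)) 1 :=
  ⟨(reflectionField_characteristicField i₀).rotationMap i₀, fun y hy ↦ by
    have hx := cubeCoe_mem_cubeBoundary hy
    have hr := one_le_radiusSq hx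
    exact ReflectionField.rotationMap_eq_one _ (by linarith)
      (characteristicField_of_mem_cubeBoundary hx)⟩

theorem characteristicLoop_apply (i₀ : Fin n) (y : I^(Fin n)) :
    characteristicLoop i₀ y = (reflectionField_characteristicField i₀).rotationMap i₀ y := rfl

theorem rotationMap_fillingField_of_apply_zero_eq_zero (i₀ : Fin n) {y : I^(Fin (n + 1))}
    (hy : y 0 = 0) : (reflectionField_fillingField i₀).rotationMap i₀.succ y =
      blockInclusion (n + 1) (characteristicLoop i₀ (Fin.tail y)) := by
  have hV : fillingField i₀ (cubeCoe y) = _ :=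
    fillingField_of_apply_zero_eq_zero (congrArg Subtype.val hy)
  rw [characteristicLoop_apply, ReflectionField.rotationMap_apply _ _ (Fin.tail y),
    ← rotation_cons_zero]
  simp only [ReflectionField.rotationMap_apply, hV, single_succ i₀.succ]
  rfl

theorem rotationMap_fillingField_of_mem_otherFaces (i₀ : Fin n) {y : I^(Fin (n + 1))}
    (hy : y ∈ otherFaces n) : (reflectionField_fillingField i₀).rotationMap i₀.succ y = 1 := by
  obtain ⟨c, hc, hV⟩ := exists_fillingField_eq_smul (i₀ := i₀) (y := cubeCoe y) (y 0).2
    (hy.imp (congrArg Subtype.val) cubeCoe_mem_cubeBoundary)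
  exact ReflectionField.rotationMap_eq_one _ hc.ne' hV

/-- The loop in the sphere that is the image of the filling of the characteristic loop. -/
noncomputable def fillingLoop (i₀ : Fin n) :
    Ω^ (Fin (n + 1)) (UnitSphere (n + 1)) (spherePole (n + 1)) :=
  ⟨(orbitMap (n + 1)).comp ((reflectionField_fillingField i₀).rotationMap i₀.succ), fun y hy ↦ by
    rw [ContinuousMap.comp_apply]
    rcases mem_boundary_iff.mp hy with hy | hy
    · rw [rotationMap_fillingField_of_apply_zero_eq_zero i₀ hy, orbitMap_blockInclusion]
    · rw [rotationMap_fillingField_of_mem_otherFaces i₀ hy, orbitMap_one]⟩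

theorem isConnectingLift_fillingLoop (i₀ : Fin n) :
    IsConnectingLift ((reflectionField_fillingField i₀).rotationMap i₀.succ) (fillingLoop i₀)
      (characteristicLoop i₀) where
  continuous := map_continuous _
  orbitMap_eq _ := rfl
  eq_blockInclusion _ := rotationMap_fillingField_of_apply_zero_eq_zero i₀
  eq_one _ := rotationMap_fillingField_of_mem_otherFaces i₀

theorem zpowers_loopClass_fillingLoop (i₀ : Fin n) :
    Subgroup.zpowers (loopClass (fillingLoop i₀)) = ⊤ :=
  (transverse_fillingField i₀).zpowers_eq_top (southFiber_fillingField i₀)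
    ((reflectionField_fillingField i₀).admissible.hasClass_loopClass
      ((reflectionField_fillingField i₀).orbitMap_rotationMap i₀.succ))

variable [Nonempty (Fin n)]

theorem Transverse.exists_loopClass_eq_zpow {F : (Fin n → ℝ) → ℝ × (Fin n → ℝ)} (hF : Transverse F)
    {x : UnitSphere n} (hx : x = spherePole n) (f : Ω^ (Fin n) (UnitSphere n) x)
    (hf : ∀ y, f y = toSphere (F (cubeCoe y))) :
    ∃ g, Subgroup.zpowers g = ⊤ ∧ loopClass f = g ^ degree F := by
  subst hx
  exact ⟨fundamentalClass n, zpowers_fundamentalClass,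
    (hF.toAdmissible.hasClass_loopClass hf).unique hF.hasClass⟩

theorem exists_piMap_orbitMap_characteristicLoop_eq (hn : Odd n) (i₀ : Fin n) :
    ∃ g, Subgroup.zpowers g = ⊤ ∧
      piMap (orbitMap n) (loopClass (characteristicLoop i₀)) = g * g := by
  let f : Ω^ (Fin n) (UnitSphere n) (orbitMap n 1) :=
    ⟨(orbitMap n).comp (characteristicLoop i₀).1, fun y hy ↦
      congrArg (orbitMap n) ((characteristicLoop i₀).2 y hy)⟩
  obtain ⟨g, hg, hgf⟩ := (transverse_characteristicField i₀).exists_loopClass_eq_zpow orbitMap_one f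
    ((reflectionField_characteristicField i₀).orbitMap_rotationMap i₀)
  refine ⟨g⁻¹, by rwa [Subgroup.zpowers_inv], ?_⟩
  rw [piMap_loopClass (orbitMap n) (characteristicLoop i₀) f fun _ ↦ rfl, hgf,
    degree_characteristicField hn, _root_.zpow_neg, _root_.zpow_two, _root_.mul_inv_rev]

end CharacteristicLoop

end Steenrod

open Steenrod in
theorem stmt13_general (m : ℕ) {G : Type*} [Group G]
    (δ : G →* HomotopyGroup (Fin (2 * m + 1)) (SO (2 * m + 2)) 1)
    (hδ : ∀ z, piMap (blockInclusion (2 * m + 2) : C(SO (2 * m + 2), SO (2 * m + 3))) z = 1 ↔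
      z ∈ Set.range δ)
    {α : G} (hα : Subgroup.zpowers α = ⊤) :
    ∃ β : HomotopyGroup (Fin (2 * m + 1)) (UnitSphere (2 * m + 1)) (orbitMap (2 * m + 1) 1),
      Subgroup.zpowers β = ⊤ ∧ piMap (orbitMap (2 * m + 1)) (δ α) = β * β := by
  let χ := characteristicLoop (0 : Fin (2 * m + 1))
  have hχ : Subgroup.zpowers (δ α) = Subgroup.zpowers (loopClass χ) := by
    rw [← ker_piHom_blockInclusion (isConnectingLift_fillingLoop 0)
      (zpowers_loopClass_fillingLoop 0), ← MonoidHom.map_zpowers, hα, ← MonoidHom.range_eq_map]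
    exact Subgroup.ext fun z ↦ (hδ z).symm
  obtain ⟨g, hg, hgχ⟩ := exists_piMap_orbitMap_characteristicLoop_eq (odd_two_mul_add_one m) 0
  have hmap := congrArg (Subgroup.map (piHom (orbitMap (2 * m + 1)))) hχ
  rw [MonoidHom.map_zpowers, MonoidHom.map_zpowers] at hmap
  exact exists_zpowers_eq_top_of_zpowers_eq_zpowers_mul_self hg
    (hmap.trans (congrArg Subgroup.zpowers hgχ))

/-- Steenrod's theorem: for odd `n` (written `n = 2m+1`), in the fibration
`SO(n+1) → SO(n+2) → S^{n+1}` the composite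
`π_{n+1}(S^{n+1}) —δ→ π_n(SO(n+1)) —p_*→ π_n(Sⁿ)` (with `p : SO(n+1) → Sⁿ` the
canonical bundle `A ↦ A·e₀` and `δ` the connecting homomorphism, characterized
here by exactness in the long exact sequence of the fibration) sends a
generator to twice a generator. -/
theorem stmt13 (m : ℕ)
    -- `p : SO(n+1) → Sⁿ`, `A ↦ A e₀`, for `n = 2m+1`
    (p : C(Matrix.specialOrthogonalGroup (Fin (2*m+1+1)) ℝ,
          Metric.sphere (0 : EuclideanSpace ℝ (Fin (2*m+1+1))) 1))
    (hp : ∀ A, ((p A : EuclideanSpace ℝ (Fin (2*m+1+1))) : Fin (2*m+1+1) → ℝ) =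
      A.1 *ᵥ (EuclideanSpace.single 0 1 : EuclideanSpace ℝ (Fin (2*m+1+1))))
    -- `q : SO(n+2) → S^{n+1}`, `A ↦ A e₀`
    (q : C(Matrix.specialOrthogonalGroup (Fin (2*m+2+1)) ℝ,
          Metric.sphere (0 : EuclideanSpace ℝ (Fin (2*m+2+1))) 1))
    (hq : ∀ A, ((q A : EuclideanSpace ℝ (Fin (2*m+2+1))) : Fin (2*m+2+1) → ℝ) =
      A.1 *ᵥ (EuclideanSpace.single 0 1 : EuclideanSpace ℝ (Fin (2*m+2+1))))
    -- the block inclusion `j : SO(n+1) ↪ SO(n+2)`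
    (j : C(Matrix.specialOrthogonalGroup (Fin (2*m+1+1)) ℝ,
          Matrix.specialOrthogonalGroup (Fin (2*m+2+1)) ℝ))
    (hj : ∀ A, (j A).1 = fun i j' =>
      if hi : i = 0 then (if j' = 0 then (1:ℝ) else 0)
      else if hj' : j' = 0 then (0:ℝ) else A.1 (i.pred hi) (j'.pred hj'))
    -- the connecting homomorphism of the fibration, pinned down by exactness
    (δ : HomotopyGroup (Fin (2*m+2))
          (Metric.sphere (0 : EuclideanSpace ℝ (Fin (2*m+2+1))) 1) (q (j 1)) →*
        HomotopyGroup (Fin (2*m+1))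
          (Matrix.specialOrthogonalGroup (Fin (2*m+1+1)) ℝ) 1)
    (hexact_q : ∀ y, δ y = 1 ↔ y ∈ Set.range
      (piMap (N := Fin (2*m+2)) (x := (j 1 :
        Matrix.specialOrthogonalGroup (Fin (2*m+2+1)) ℝ)) q))
    (hexact_δ : ∀ z, piMap (N := Fin (2*m+1)) j z = 1 ↔ z ∈ Set.range δ) :
    ∀ α, Subgroup.zpowers α = ⊤ →
      ∃ β : HomotopyGroup (Fin (2*m+1))
        (Metric.sphere (0 : EuclideanSpace ℝ (Fin (2*m+1+1))) 1) (p 1),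
        Subgroup.zpowers β = ⊤ ∧ piMap p (δ α) = β * β := by
  obtain rfl : p = Steenrod.orbitMap (2 * m + 1) :=
    ContinuousMap.ext fun A ↦ Subtype.ext (WithLp.ofLp_injective 2 (hp A))
  obtain rfl : j = (Steenrod.blockInclusion (2 * m + 2) : C(_, _)) :=
    ContinuousMap.ext fun A ↦ Subtype.ext (hj A)
  exact fun _ ↦ stmt13_general m δ hexact_δ
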